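/- arXiv:2501.16520 — 9 statements merged into one kernel-verified Lean document; each statement's English description precedes it below -/
import Mathlib

section
/- Under Assumptions A1 and A2, there exists a constant M₁ > 0 such that for every x ∈ ℝⁿ and y ∈ ℝᵐ, ‖∇ℓ(x) − F(x,y)‖ ≤ M₁ ‖y − y*(x)‖. -/
open Set MeasureTheory
open scoped NNReal RealInnerProductSpace

noncomputable section

/-- `Vec k` is the Euclidean space `ℝ^k`. -/
abbrev Vec (k : ℕ) : Type := EuclideanSpace ℝ (Fin k)

/-- Partial gradient of `f(x, y)` with respect to `x`. -/
noncomputable def gradx {n m : ℕ} (f : Vec n → Vec m → ℝ) (x : Vec n) (y : Vec m) : Vec n :=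
  gradient (fun x' => f x' y) x

/-- Partial gradient of `f(x, y)` with respect to `y`. -/
noncomputable def grady {n m : ℕ} (f : Vec n → Vec m → ℝ) (x : Vec n) (y : Vec m) : Vec m :=
  gradient (fun y' => f x y') y

/-- The surrogate map `F(x,y) = ∇ₓ f(x,y) − (∇²_{yx} g(x,y))ᵀ v(x,y)`. -/
noncomputable def Fsur {n m : ℕ} (f : Vec n → Vec m → ℝ)
    (Gyx : Vec n → Vec m → Vec n →L[ℝ] Vec m) (v : Vec n → Vec m → Vec m)
    (x : Vec n) (y : Vec m) : Vec n :=
  gradx f x y - ContinuousLinearMap.adjoint (Gyx x y) (v x y)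

/-!
Strong convexity makes `∇_y g(x, ·)` strongly monotone, and its derivative inherits this, hence is
invertible with inverse bounded by `1 / μ`. The implicit function theorem therefore gives
`Dy*(x) = -(∇²_{yy} g)⁻¹ ∇²_{yx} g` at `(x, y*(x))`, and since `∇²_{yy} g` is symmetric, the chain
rule for `ℓ` reads `∇ℓ(x) = F(x, y*(x))`. The vector `v` solves a uniformly coercive linear system
whose matrix and bounded right-hand side are Lipschitz, so `v`, and with it `F`, is Lipschitz. What
is to be bounded is then `F(x, y*(x)) - F(x, y)`.
-/

open Filter
open scoped Gradient InnerProduct Topology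

section StrongMonotonicity

variable {E : Type*} [NormedAddCommGroup E]

theorem add_fderiv_add_le_of_uniformConvexOn [NormedSpace ℝ E] {s : Set E} {ψ : ℝ → ℝ} {φ : E → ℝ}
    {φ' : E →L[ℝ] ℝ} {a b : E} (hφ : UniformConvexOn s ψ φ) (ha : a ∈ s) (hb : b ∈ s)
    (hφ' : HasFDerivAt φ φ' a) : φ a + φ' (b - a) + ψ ‖b - a‖ ≤ φ b := by
  have hquotient : ∀ᶠ t : ℝ in 𝓝[>] 0,
      t⁻¹ • (φ (a + t • (b - a)) - φ a) ≤ φ b - φ a - (1 - t) * ψ ‖b - a‖ := by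
    filter_upwards [Ioo_mem_nhdsGT one_pos] with t ⟨ht0, ht1⟩
    have hpoint : t • b + (1 - t) • a = a + t • (b - a) := by module
    have hconv := hφ.2 hb ha ht0.le (sub_nonneg.2 ht1.le) (add_sub_cancel t 1)
    rw [hpoint] at hconv
    rw [smul_eq_mul, inv_mul_le_iff₀ ht0]
    simp only [smul_eq_mul] at hconv
    linarith
  have hright : Tendsto (fun t : ℝ => φ b - φ a - (1 - t) * ψ ‖b - a‖) (𝓝[>] 0)
      (𝓝 (φ b - φ a - (1 - 0) * ψ ‖b - a‖)) :=
    (Continuous.tendsto (by fun_prop) 0).mono_left nhdsWithin_le_nhds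
  have hlimit := le_of_tendsto_of_tendsto
    (hφ'.hasLineDerivAt (b - a)).tendsto_slope_zero_right hright hquotient
  linarith

variable [InnerProductSpace ℝ E]

/-- Strong monotonicity, with modulus `μ`, of an everywhere defined operator on a real inner product
space. For linear operators this is coercivity of the associated quadratic form. -/
def StronglyMonotone (μ : ℝ) (G : E → E) : Prop :=
  ∀ a b, μ * ‖a - b‖ ^ 2 ≤ ⟪G a - G b, a - b⟫

theorem stronglyMonotone_gradient [CompleteSpace E] {φ : E → ℝ} {μ : ℝ}
    (hφ : StrongConvexOn univ μ φ) (hd : Differentiable ℝ φ) : StronglyMonotone μ (∇ φ) := by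
  intro a b
  have hab := add_fderiv_add_le_of_uniformConvexOn hφ (mem_univ a) (mem_univ b)
    (hd a).hasGradientAt.hasFDerivAt
  have hba := add_fderiv_add_le_of_uniformConvexOn hφ (mem_univ b) (mem_univ a)
    (hd b).hasGradientAt.hasFDerivAt
  rw [InnerProductSpace.toDual_apply_apply] at hab hba
  rw [norm_sub_rev, ← neg_sub a b, inner_neg_right] at hab
  rw [inner_sub_left]
  linarith

namespace StronglyMonotone

theorem mul_norm_sub_le {G : E → E} {μ : ℝ} (hG : StronglyMonotone μ G) (a b : E) :
    μ * ‖a - b‖ ≤ ‖G a - G b‖ := by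
  rcases (norm_nonneg (a - b)).eq_or_lt with hab | hab
  · rw [← hab, mul_zero]
    exact norm_nonneg _
  · refine le_of_mul_le_mul_right ?_ hab
    calc μ * ‖a - b‖ * ‖a - b‖ = μ * ‖a - b‖ ^ 2 := by ring
      _ ≤ ⟪G a - G b, a - b⟫ := hG a b
      _ ≤ ‖G a - G b‖ * ‖a - b‖ := real_inner_le_norm _ _

theorem injective {G : E → E} {μ : ℝ} (hG : StronglyMonotone μ G) (hμ : 0 < μ) :
    Function.Injective G := by
  intro a b hab
  have hle := hG.mul_norm_sub_le a b
  rw [hab, sub_self, norm_zero] at hle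
  exact sub_eq_zero.1 (norm_le_zero_iff.1 (nonpos_of_mul_nonpos_right hle hμ))

theorem of_hasFDerivAt {G : E → E} {T : E →L[ℝ] E} {μ : ℝ} {y : E} (hG : StronglyMonotone μ G)
    (hT : HasFDerivAt G T y) : StronglyMonotone μ T := by
  intro a b
  rw [← map_sub]
  set h := a - b
  have hslope : Tendsto (fun t : ℝ => ⟪t⁻¹ • (G (y + t • h) - G y), h⟫) (𝓝[>] 0) (𝓝 ⟪T h, h⟫) :=
    (hT.hasLineDerivAt h).tendsto_slope_zero_right.inner tendsto_const_nhds
  refine ge_of_tendsto hslope ?_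
  filter_upwards [self_mem_nhdsWithin] with t (ht : 0 < t)
  have hstep := hG (y + t • h) y
  rw [add_sub_cancel_left, norm_smul, inner_smul_right, Real.norm_of_nonneg ht.le] at hstep
  rw [real_inner_smul_left, le_inv_mul_iff₀ ht]
  refine le_of_mul_le_mul_left ?_ ht
  linarith

theorem isInvertible [CompleteSpace E] {T : E →L[ℝ] E} {μ : ℝ} (hT : StronglyMonotone μ T)
    (hμ : 0 < μ) : T.IsInvertible := by
  have hcoercive : IsCoercive ((innerSL ℝ).comp T) := by
    refine ⟨μ, hμ, fun u => ?_⟩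
    have hu := hT u 0
    rw [map_zero, sub_zero, sub_zero] at hu
    calc μ * ‖u‖ * ‖u‖ = μ * ‖u‖ ^ 2 := by ring
      _ ≤ ⟪T u, u⟫ := hu
  refine ⟨hcoercive.continuousLinearEquivOfBilin, ?_⟩
  ext u
  exact (hcoercive.unique_continuousLinearEquivOfBilin fun w => rfl).symm

theorem norm_le_div {T : E →L[ℝ] E} {μ : ℝ} (hT : StronglyMonotone μ T) (hμ : 0 < μ) (u : E) :
    ‖u‖ ≤ ‖T u‖ / μ := by
  have hu := hT.mul_norm_sub_le u 0
  rw [map_zero, sub_zero, sub_zero] at hu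
  exact (le_div_iff₀' hμ).2 hu

theorem lipschitzWith_of_apply_eq {Z : Type*} [PseudoMetricSpace Z] {T : Z → E →L[ℝ] E}
    {b v : Z → E} {μ L K C : ℝ≥0} (hT : ∀ z, StronglyMonotone μ (T z)) (hμ : 0 < μ)
    (hb : LipschitzWith L b) (hTL : LipschitzWith K T) (hvC : ∀ z, ‖v z‖ ≤ C)
    (hv : ∀ z, T z (v z) = b z) : LipschitzWith ((L + K * C) / μ) v := by
  refine LipschitzWith.of_dist_le_mul fun z w => ?_
  have hresidual : T z (v z) - T z (v w) = (b z - b w) - (T z - T w) (v w) := by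
    rw [_root_.sub_apply, hv, hv]
    abel
  have hperturb : ‖(T z - T w) (v w)‖ ≤ K * dist z w * C :=
    (T z - T w).le_of_opNorm_le_of_le (by simpa only [dist_eq_norm] using hTL.dist_le_mul z w)
      (hvC w)
  have hμv : μ * ‖v z - v w‖ ≤ (L + K * C) * dist z w :=
    calc μ * ‖v z - v w‖ ≤ ‖(b z - b w) - (T z - T w) (v w)‖ :=
          hresidual ▸ (hT z).mul_norm_sub_le _ _
      _ ≤ ‖b z - b w‖ + ‖(T z - T w) (v w)‖ := norm_sub_le _ _
      _ ≤ L * dist z w + K * dist z w * C := by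
          gcongr
          simpa only [dist_eq_norm] using hb.dist_le_mul z w
      _ = (L + K * C) * dist z w := by ring
  rw [dist_eq_norm, NNReal.coe_div, div_mul_eq_mul_div, le_div_iff₀' (by exact_mod_cast hμ)]
  exact_mod_cast hμv

theorem hasStrictFDerivAt_of_apply_eq_zero [CompleteSpace E] {X : Type*} [NormedAddCommGroup X]
    [NormedSpace ℝ X] [CompleteSpace X] {G : X → E → E} {A : X → E → X →L[ℝ] E}
    {T : X → E → E →L[ℝ] E} {s : X → E} {μ : ℝ} {x : X}
    (hG : ∀ x, StronglyMonotone μ (G x)) (hμ : 0 < μ)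
    (hA : ∀ᶠ p in 𝓝 (x, s x), HasFDerivAt (G · p.2) (A p.1 p.2) p.1)
    (hT : ∀ᶠ p in 𝓝 (x, s x), HasFDerivAt (G p.1) (T p.1 p.2) p.2)
    (hAc : ContinuousAt ↿A (x, s x)) (hTc : ContinuousAt ↿T (x, s x))
    (hs : ∀ x, G x (s x) = 0) :
    HasStrictFDerivAt s (-(T x (s x)).inverse ∘L A x (s x)) x := by
  have hinv : (T x (s x)).IsInvertible :=
    ((hG x).of_hasFDerivAt hT.self_of_nhds).isInvertible hμ
  -- Injectivity of `G x'` identifies `s x'` with the local implicit function, so that no continuity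
  -- of `s` has to be known beforehand.
  refine (hasStrictFDerivAt_implicitFunctionOfBivariate hA hT hAc hTc hinv).congr_of_eventuallyEq ?_
  filter_upwards [eventually_apply_implicitFunctionOfBivariate hA hT hAc hTc hinv] with x' hx'
  exact (hG x').injective hμ (hx'.trans ((hs x).trans (hs x').symm))

end StronglyMonotone

end StrongMonotonicity

section Gradient

variable {X Y : Type*} [NormedAddCommGroup X] [InnerProductSpace ℝ X] [CompleteSpace X]
  [NormedAddCommGroup Y] [InnerProductSpace ℝ Y] [CompleteSpace Y]

theorem isSelfAdjoint_of_hasFDerivAt_gradient {φ : Y → ℝ} {T : Y →L[ℝ] Y} {y : Y}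
    (hφ : ∀ᶠ z in 𝓝 y, DifferentiableAt ℝ φ z) (hT : HasFDerivAt (∇ φ) T y) :
    IsSelfAdjoint T := by
  rw [ContinuousLinearMap.isSelfAdjoint_iff_isSymmetric]
  intro u w
  have hsymm := second_derivative_symmetric_of_eventually
    (hφ.mono fun z hz => hz.hasGradientAt.hasFDerivAt)
    ((innerSL ℝ).hasFDerivAt.comp y hT) u w
  have hsymm' : ⟪T u, w⟫ = ⟪T w, u⟫ := hsymm
  exact hsymm'.trans (real_inner_comm _ _)

theorem gradient_eq_zero_of_isLocalMin {φ : Y → ℝ} {y : Y} (hy : IsLocalMin φ y) :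
    ∇ φ y = 0 := by
  rw [gradient, hy.fderiv_eq_zero, map_zero]

theorem hasGradientAt_comp_graph {f : X → Y → ℝ} {s : X → Y} {D : X →L[ℝ] Y} {x : X}
    (hf : DifferentiableAt ℝ ↿f (x, s x)) (hs : HasFDerivAt s D x) :
    HasGradientAt (fun x' => f x' (s x')) (∇ (f · (s x)) x + (D†) (∇ (f x) (s x))) x := by
  set f' := fderiv ℝ ↿f (x, s x)
  have hf' : HasFDerivAt ↿f f' (x, s x) := hf.hasFDerivAt
  have hX : HasFDerivAt (f · (s x)) (f' ∘L .inl ℝ X Y) x :=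
    HasFDerivAt.comp (g := ↿f) (f := fun x' => (x', s x)) x hf' (hasFDerivAt_prodMk_left x (s x))
  have hY : HasFDerivAt (f x) (f' ∘L .inr ℝ X Y) (s x) :=
    HasFDerivAt.comp (g := ↿f) (s x) hf' (hasFDerivAt_prodMk_right x (s x))
  have hgraph : HasFDerivAt (fun x' => f x' (s x')) (f' ∘L (.prod (.id ℝ X) D)) x :=
    HasFDerivAt.comp (g := ↿f) x hf' ((hasFDerivAt_id x).prodMk hs)
  refine hasGradientAt_iff_hasFDerivAt.2 (hgraph.congr_fderiv ?_)
  ext h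
  calc f' (h, D h) = f' (h, 0) + f' (0, D h) := by rw [← map_add]; simp
    _ = ⟪∇ (f · (s x)) x, h⟫ + ⟪∇ (f x) (s x), D h⟫ := by
        rw [gradient, gradient, hX.fderiv, hY.fderiv, InnerProductSpace.toDual_symm_apply,
          InnerProductSpace.toDual_symm_apply]
        rfl
    _ = ⟪∇ (f · (s x)) x + (D†) (∇ (f x) (s x)), h⟫ := by
        rw [inner_add_left, ContinuousLinearMap.adjoint_inner_left]

theorem hasGradientAt_comp_graph_of_isSelfAdjoint {f : X → Y → ℝ} {s : X → Y} {A : X →L[ℝ] Y}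
    {T : Y →L[ℝ] Y} {x : X} {v : Y} (hf : DifferentiableAt ℝ ↿f (x, s x)) (hT : T.IsInvertible)
    (hTsa : IsSelfAdjoint T) (hs : HasFDerivAt s (-T.inverse ∘L A) x)
    (hv : T v = ∇ (f x) (s x)) :
    HasGradientAt (fun x' => f x' (s x')) (∇ (f · (s x)) x - (A†) v) x := by
  have hcomp : T ∘L (-T.inverse ∘L A) = -A := by
    ext h
    simp [hT]
  have hadjoint : ((-T.inverse ∘L A)†) (T v) = -(A†) v :=
    calc ((-T.inverse ∘L A)†) (T v) = ((-T.inverse ∘L A)†) ((T†) v) := by rw [hTsa.adjoint_eq]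
      _ = ((T ∘L (-T.inverse ∘L A))†) v := by
          rw [ContinuousLinearMap.adjoint_comp, ContinuousLinearMap.comp_apply]
      _ = -(A†) v := by rw [hcomp, map_neg, _root_.neg_apply]
  have hgrad := hasGradientAt_comp_graph hf hs
  rwa [← hv, hadjoint, ← sub_eq_add_neg] at hgrad

end Gradient

theorem lipschitzWith_clm_apply {𝕜 Z E F : Type*} [NontriviallyNormedField 𝕜]
    [PseudoMetricSpace Z] [SeminormedAddCommGroup E] [NormedSpace 𝕜 E] [SeminormedAddCommGroup F]
    [NormedSpace 𝕜 F] {B : Z → E →L[𝕜] F} {u : Z → E} {K L C M : ℝ≥0}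
    (hB : LipschitzWith K B) (hBC : ∀ z, ‖B z‖ ≤ C) (hu : LipschitzWith L u)
    (huM : ∀ z, ‖u z‖ ≤ M) : LipschitzWith (C * L + K * M) fun z => B z (u z) := by
  refine LipschitzWith.of_dist_le_mul fun z w => ?_
  have hBu : ‖B z (u z - u w)‖ ≤ C * (L * dist z w) :=
    (B z).le_of_opNorm_le_of_le (hBC z) (by simpa only [dist_eq_norm] using hu.dist_le_mul z w)
  have hdB : ‖(B z - B w) (u w)‖ ≤ K * dist z w * M :=
    (B z - B w).le_of_opNorm_le_of_le (by simpa only [dist_eq_norm] using hB.dist_le_mul z w)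
      (huM w)
  calc dist (B z (u z)) (B w (u w)) = ‖B z (u z - u w) + (B z - B w) (u w)‖ := by
        rw [dist_eq_norm, map_sub, _root_.sub_apply, sub_add_sub_cancel]
    _ ≤ C * (L * dist z w) + K * dist z w * M := norm_add_le_of_le hBu hdB
    _ = ↑(C * L + K * M) * dist z w := by push_cast; ring

section Bilevel

variable {X Y : Type*} [NormedAddCommGroup X] [InnerProductSpace ℝ X] [CompleteSpace X]
  [NormedAddCommGroup Y] [InnerProductSpace ℝ Y] [CompleteSpace Y]

theorem hasGradientAt_comp_argmin {f g : X → Y → ℝ} {A : X → Y → X →L[ℝ] Y}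
    {T : X → Y → Y →L[ℝ] Y} {s : X → Y} {μ : ℝ} {x : X} {v : Y}
    (hf : DifferentiableAt ℝ ↿f (x, s x)) (hg : ∀ x, Differentiable ℝ (g x)) (hμ : 0 < μ)
    (hsc : ∀ x, StrongConvexOn univ μ (g x))
    (hA : ∀ x y, HasFDerivAt (fun x' => ∇ (g x') y) (A x y) x)
    (hT : ∀ x y, HasFDerivAt (∇ (g x)) (T x y) y)
    (hAc : ContinuousAt ↿A (x, s x)) (hTc : ContinuousAt ↿T (x, s x))
    (hs : ∀ x, IsMinOn (g x) univ (s x)) (hv : T x (s x) v = ∇ (f x) (s x)) :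
    HasGradientAt (fun x' => f x' (s x')) (∇ (f · (s x)) x - (A x (s x)†) v) x := by
  have hmono : ∀ x, StronglyMonotone μ (∇ (g x)) := fun x =>
    stronglyMonotone_gradient (hsc x) (hg x)
  have hinv : (T x (s x)).IsInvertible := ((hmono x).of_hasFDerivAt (hT x (s x))).isInvertible hμ
  have hself : IsSelfAdjoint (T x (s x)) :=
    isSelfAdjoint_of_hasFDerivAt_gradient (Eventually.of_forall (hg x)) (hT x (s x))
  have hsD : HasStrictFDerivAt s (-(T x (s x)).inverse ∘L A x (s x)) x :=
    StronglyMonotone.hasStrictFDerivAt_of_apply_eq_zero hmono hμ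
      (Eventually.of_forall fun p => hA p.1 p.2) (Eventually.of_forall fun p => hT p.1 p.2)
      hAc hTc fun x => gradient_eq_zero_of_isLocalMin ((hs x).isLocalMin univ_mem)
  exact hasGradientAt_comp_graph_of_isSelfAdjoint hf hinv hself hsD.hasFDerivAt hv

theorem lipschitzWith_sub_adjoint_apply_solution {Z : Type*} [PseudoMetricSpace Z] {a : Z → X}
    {A : Z → X →L[ℝ] Y} {T : Z → Y →L[ℝ] Y} {b v : Z → Y} {μ C M La Lb LA LT : ℝ≥0}
    (hμ : 0 < μ) (hT : ∀ z, StronglyMonotone μ (T z)) (hv : ∀ z, T z (v z) = b z)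
    (hAM : ∀ z, ‖A z‖ ≤ M) (hbC : ∀ z, ‖b z‖ ≤ C) (ha : LipschitzWith La a)
    (hb : LipschitzWith Lb b) (hA : LipschitzWith LA A) (hTL : LipschitzWith LT T) :
    LipschitzWith (La + (M * ((Lb + LT * (C / μ)) / μ) + LA * (C / μ)))
      fun z => a z - (A z†) (v z) := by
  have hvC : ∀ z, ‖v z‖ ≤ C / μ := fun z =>
    ((hT z).norm_le_div (by exact_mod_cast hμ) (v z)).trans (by rw [hv z]; gcongr; exact hbC z)
  have hvL : LipschitzWith ((Lb + LT * (C / μ)) / μ) v :=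
    StronglyMonotone.lipschitzWith_of_apply_eq hT hμ hb hTL (by exact_mod_cast hvC) hv
  have hadjoint : LipschitzWith LA fun z => A z† := by
    simpa using! ContinuousLinearMap.adjoint.lipschitz.comp hA
  refine ha.sub (lipschitzWith_clm_apply hadjoint (fun z => ?_) hvL (by exact_mod_cast hvC))
  rw [LinearIsometryEquiv.norm_map]
  exact hAM z

theorem stmt_0_general (f g : X → Y → ℝ) (hf : Differentiable ℝ ↿f) (Cyf : ℝ)
    (hfyB : ∀ x y, ‖∇ (f x) y‖ ≤ Cyf) (Lxf Lyf : ℝ≥0)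
    (hfxL : LipschitzWith Lxf fun p : X × Y => ∇ (f · p.2) p.1)
    (hfyL : LipschitzWith Lyf fun p : X × Y => ∇ (f p.1) p.2)
    (hg : ∀ x, Differentiable ℝ (g x)) (μg : ℝ) (hμg : 0 < μg)
    (hsc : ∀ x, StrongConvexOn univ μg (g x)) (Lyxg : ℝ≥0)
    (hgyLx : ∀ y, LipschitzWith Lyxg fun x => ∇ (g x) y)
    (Gyx : X → Y → X →L[ℝ] Y) (Gyy : X → Y → Y →L[ℝ] Y)
    (hGyx : ∀ x y, HasFDerivAt (fun x' => ∇ (g x') y) (Gyx x y) x)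
    (hGyy : ∀ x y, HasFDerivAt (∇ (g x)) (Gyy x y) y) (Cyxg Cyyg : ℝ≥0)
    (hGyxL : LipschitzWith Cyxg fun p : X × Y => Gyx p.1 p.2)
    (hGyyL : LipschitzWith Cyyg fun p : X × Y => Gyy p.1 p.2)
    (ystar : X → Y) (hystar : ∀ x, IsMinOn (g x) univ (ystar x))
    (v : X → Y → Y) (hv : ∀ x y, Gyy x y (v x y) = ∇ (f x) y) :
    ∃ M₁ : ℝ, 0 < M₁ ∧ ∀ x y,
      ‖∇ (fun x' => f x' (ystar x')) x - (∇ (f · y) x - (Gyx x y†) (v x y))‖ ≤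
        M₁ * ‖y - ystar x‖ := by
  have hgradient : ∀ x, ∇ (fun x' => f x' (ystar x')) x =
      ∇ (f · (ystar x)) x - (Gyx x (ystar x)†) (v x (ystar x)) := fun x =>
    (hasGradientAt_comp_argmin (hf _) hg hμg hsc hGyx hGyy hGyxL.continuous.continuousAt
      hGyyL.continuous.continuousAt hystar (hv x (ystar x))).gradient
  have hGyx_le : ∀ x y, ‖Gyx x y‖ ≤ Lyxg := fun x y => (hGyx x y).le_of_lipschitz (hgyLx y)
  have hGyy_mono : ∀ x y, StronglyMonotone μg (Gyy x y) := fun x y =>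
    (stronglyMonotone_gradient (hsc x) (hg x)).of_hasFDerivAt (hGyy x y)
  lift μg to ℝ≥0 using hμg.le
  lift Cyf to ℝ≥0 using (norm_nonneg _).trans (hfyB 0 0)
  obtain ⟨K, hF⟩ : ∃ K : ℝ≥0, LipschitzWith K
      fun p : X × Y => ∇ (f · p.2) p.1 - (Gyx p.1 p.2†) (v p.1 p.2) :=
    ⟨_, lipschitzWith_sub_adjoint_apply_solution (by exact_mod_cast hμg)
      (fun p => hGyy_mono p.1 p.2) (fun p => hv p.1 p.2) (fun p => hGyx_le p.1 p.2)
      (fun p => hfyB p.1 p.2) hfxL hfyL hGyxL hGyyL⟩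
  refine ⟨K + 1, by positivity, fun x y => ?_⟩
  have hFx := hF.dist_le_mul (x, ystar x) (x, y)
  rw [dist_prod_same_left, dist_comm (ystar x), dist_eq_norm, dist_eq_norm] at hFx
  rw [hgradient]
  linarith [norm_nonneg (y - ystar x)]

end Bilevel

/-- Under Assumptions A1 and A2, there exists `M₁ > 0` such that
`‖∇ℓ(x) − F(x,y)‖ ≤ M₁ ‖y − y*(x)‖` for all `x, y`. -/
theorem stmt_0 {n m : ℕ} (f g : Vec n → Vec m → ℝ)
    -- Assumption A1
    (hf : ContDiff ℝ 1 (Function.uncurry f))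
    (Cxf Cyf : ℝ) (hCxf : 0 < Cxf) (hCyf : 0 < Cyf)
    (hfxB : ∀ x y, ‖gradx f x y‖ ≤ Cxf)
    (hfyB : ∀ x y, ‖grady f x y‖ ≤ Cyf)
    (Lxf Lyf : ℝ≥0)
    (hfxL : LipschitzWith Lxf fun p : Vec n × Vec m => gradx f p.1 p.2)
    (hfyL : LipschitzWith Lyf fun p : Vec n × Vec m => grady f p.1 p.2)
    -- Assumption A2
    (hg : ContDiff ℝ 2 (Function.uncurry g))
    (μg : ℝ) (hμg : 0 < μg)
    (hsc : ∀ x, StrongConvexOn Set.univ μg (g x))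
    (Lyyg Lyxg : ℝ≥0)
    (hgyLy : ∀ x, LipschitzWith Lyyg fun y => grady g x y)
    (hgyLx : ∀ y, LipschitzWith Lyxg fun x => grady g x y)
    (Gyx : Vec n → Vec m → Vec n →L[ℝ] Vec m)
    (Gyy : Vec n → Vec m → Vec m →L[ℝ] Vec m)
    (hGyx : ∀ x y, HasFDerivAt (fun x' => grady g x' y) (Gyx x y) x)
    (hGyy : ∀ x y, HasFDerivAt (fun y' => grady g x y') (Gyy x y) y)
    (Cyxg Cyyg : ℝ≥0)
    (hGyxL : LipschitzWith Cyxg fun p : Vec n × Vec m => Gyx p.1 p.2)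
    (hGyyL : LipschitzWith Cyyg fun p : Vec n × Vec m => Gyy p.1 p.2)
    -- lower-level solution map and the surrogate direction `v`
    (ystar : Vec n → Vec m)
    (hystar : ∀ x, IsMinOn (g x) Set.univ (ystar x))
    (v : Vec n → Vec m → Vec m)
    (hv : ∀ x y, Gyy x y (v x y) = grady f x y) :
    ∃ M₁ : ℝ, 0 < M₁ ∧ ∀ x y,
      ‖gradient (fun x' => f x' (ystar x')) x - Fsur f Gyx v x y‖ ≤ M₁ * ‖y - ystar x‖ := by
  exact stmt_0_general f g (hf.differentiable one_ne_zero) Cyf hfyB Lxf Lyf hfxL hfyL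
    (fun x => (hg.differentiable two_ne_zero).comp
      ((differentiable_const x).prodMk differentiable_id))
    μg hμg hsc Lyxg hgyLx Gyx Gyy hGyx hGyy Cyxg Cyyg hGyxL hGyyL ystar hystar v hv

end
end

section
/- Under Assumptions A1 and A2, the implicit objective ℓ(x) := f(x, y*(x)) is differentiable and its gradient (hyper-gradient) is given by ∇ℓ(x) = ∇_x f(x, y*(x)) − ∇²_{yx} g(x, y*(x))ᵀ v*(x), where v*(x) is the unique solution of the linear system ∇²_{yy} g(x, y*(x)) v*(x) = ∇_y f(x, y*(x)). -/
open Set MeasureTheory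
open scoped NNReal RealInnerProductSpace

noncomputable section

/-!
The minimizer `y*` need not be differentiable a priori. Strong convexity bounds the distance from
`y*(x')` to `y*(x)` by the size of `∇_y g(x', y*(x))`, which vanishes at `x' = x`, so
`y*(x') - y*(x) = O(x' - x)`. Subtracting from `f` the constraint `∇_y g = 0` paired with the
multiplier `v*(x)` does not change `f` along the graph of `y*`, and, the Hessian `∇²_yy g` being
symmetric, the equation defining `v*(x)` says exactly that the resulting function has vanishing
`y`-derivative at `(x, y*(x))`. Hence the motion of `y*` contributes only `o(x' - x)`, and the
hyper-gradient is the partial gradient in `x` of this function.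
-/

open Filter Topology Asymptotics InnerProductSpace Function
open scoped Gradient

section PartialDerivatives

variable {𝕜 E F G : Type*} [NontriviallyNormedField 𝕜]
  [NormedAddCommGroup E] [NormedSpace 𝕜 E] [NormedAddCommGroup F] [NormedSpace 𝕜 F]
  [NormedAddCommGroup G] [NormedSpace 𝕜 G] {x : E}

theorem differentiableAt_slice_left {Φ : E × F → G} {y : F} (hΦ : DifferentiableAt 𝕜 Φ (x, y)) :
    DifferentiableAt 𝕜 (fun x' => Φ (x', y)) x :=
  hΦ.comp x (hasFDerivAt_prodMk_left x y).differentiableAt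

theorem differentiableAt_slice_right {Φ : E × F → G} {y : F} (hΦ : DifferentiableAt 𝕜 Φ (x, y)) :
    DifferentiableAt 𝕜 (fun y' => Φ (x, y')) y :=
  hΦ.comp y (hasFDerivAt_prodMk_right x y).differentiableAt

theorem hasFDerivAt_coprod_of_partial {Φ : E × F → G} {y : F} {A : E →L[𝕜] G} {B : F →L[𝕜] G}
    (hΦ : DifferentiableAt 𝕜 Φ (x, y)) (hA : HasFDerivAt (fun x' => Φ (x', y)) A x)
    (hB : HasFDerivAt (fun y' => Φ (x, y')) B y) :
    HasFDerivAt Φ (A.coprod B) (x, y) := by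
  have hinl : A = fderiv 𝕜 Φ (x, y) ∘L .inl 𝕜 E F :=
    hA.unique (hΦ.hasFDerivAt.comp x (hasFDerivAt_prodMk_left x y))
  have hinr : B = fderiv 𝕜 Φ (x, y) ∘L .inr 𝕜 E F :=
    hB.unique (hΦ.hasFDerivAt.comp y (hasFDerivAt_prodMk_right x y))
  rw [hinl, hinr, ContinuousLinearMap.coprod_comp_inl_inr]
  exact hΦ.hasFDerivAt

theorem hasFDerivAt_comp_graph_of_isBigO {Φ : E × F → G} {A : E →L[𝕜] G} {y : E → F}
    (hΦ : HasFDerivAt Φ (A ∘L .fst 𝕜 E F) (x, y x))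
    (hy : (fun x' => y x' - y x) =O[𝓝 x] fun x' => x' - x) :
    HasFDerivAt (fun x' => Φ (x', y x')) A x := by
  have hcont : ContinuousAt y x := by
    refine tendsto_sub_nhds_zero_iff.mp (hy.trans_tendsto ?_)
    exact tendsto_sub_nhds_zero_iff.mpr tendsto_id
  have hgraph : (fun x' => (x', y x') - (x, y x)) =O[𝓝 x] fun x' => x' - x :=
    (isBigO_refl _ _).prod_left hy
  exact .of_isLittleO <|
    (hΦ.isLittleO.comp_tendsto (continuousAt_id.prodMk hcont)).trans_isBigO hgraph

end PartialDerivatives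

section StrongConvexity

variable {F : Type*} [NormedAddCommGroup F] [NormedSpace ℝ F] {s : Set F} {h : F → ℝ} {y z : F}

theorem hasLineDerivAt_add_le_sub_of_uniformConvexOn {φ : ℝ → ℝ} {h' : ℝ}
    (huc : UniformConvexOn s φ h) (hy : y ∈ s) (hz : z ∈ s) (hh : HasLineDerivAt ℝ h h' y (z - y)) :
    h' + φ ‖y - z‖ ≤ h z - h y := by
  have hslope : ∀ᶠ t : ℝ in 𝓝[>] 0,
      t⁻¹ • (h (y + t • (z - y)) - h y) ≤ h z - h y - (1 - t) * φ ‖y - z‖ := by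
    filter_upwards [Ioo_mem_nhdsGT one_pos] with t ht
    have hconv := huc.2 hy hz (sub_nonneg.2 ht.2.le) ht.1.le (sub_add_cancel 1 t)
    rw [show (1 - t) • y + t • z = y + t • (z - y) by module] at hconv
    rw [smul_eq_mul, inv_mul_le_iff₀ ht.1]
    simp only [smul_eq_mul] at hconv
    linarith
  have hlim : Tendsto (fun t : ℝ => h z - h y - (1 - t) * φ ‖y - z‖) (𝓝[>] 0)
      (𝓝 (h z - h y - (1 - 0) * φ ‖y - z‖)) :=
    (Continuous.tendsto (by fun_prop) 0).mono_left nhdsWithin_le_nhds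
  linarith [le_of_tendsto_of_tendsto hh.tendsto_slope_zero_right hlim hslope]

theorem half_mul_norm_sub_le_norm_fderiv_of_strongConvexOn {μ : ℝ} {h' : F →L[ℝ] ℝ}
    (hsc : StrongConvexOn s μ h) (hy : y ∈ s) (hz : z ∈ s) (hh : HasFDerivAt h h' y)
    (hle : h z ≤ h y) : μ / 2 * ‖z - y‖ ≤ ‖h'‖ := by
  rcases (norm_nonneg (z - y)).eq_or_lt with hzero | hpos
  · simp [← hzero]
  have hgrowth : h' (z - y) + μ / 2 * ‖y - z‖ ^ 2 ≤ h z - h y :=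
    hasLineDerivAt_add_le_sub_of_uniformConvexOn hsc hy hz (hh.hasLineDerivAt (z - y))
  have hdual : -h' (z - y) ≤ ‖h'‖ * ‖z - y‖ := (neg_le_abs _).trans (h'.le_opNorm _)
  rw [norm_sub_rev y z] at hgrowth
  refine le_of_mul_le_mul_right ?_ hpos
  linarith

theorem argmin_sub_isBigO_fderiv_of_strongConvexOn {ι : Type*} {l : Filter ι} {g : ι → F → ℝ}
    {g' : ι → F →L[ℝ] ℝ} {μ : ℝ} {ystar : ι → F} (hμ : 0 < μ)
    (hsc : ∀ᶠ i in l, StrongConvexOn s μ (g i)) (hmem : ∀ᶠ i in l, ystar i ∈ s)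
    (hmin : ∀ᶠ i in l, IsMinOn (g i) s (ystar i)) (hy : y ∈ s)
    (hg : ∀ᶠ i in l, HasFDerivAt (g i) (g' i) y) :
    (fun i => ystar i - y) =O[l] g' := by
  refine .of_bound (2 / μ) ?_
  filter_upwards [hsc, hmem, hmin, hg] with i hsc hmem hmin hg
  have hbound := half_mul_norm_sub_le_norm_fderiv_of_strongConvexOn hsc hy hmem hg (hmin hy)
  calc ‖ystar i - y‖ = 2 / μ * (μ / 2 * ‖ystar i - y‖) := by field_simp
    _ ≤ 2 / μ * ‖g' i‖ := by gcongr

theorem argmin_sub_isBigO_sub_of_strongConvexOn {E : Type*} [NormedAddCommGroup E] [NormedSpace ℝ E]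
    {g : E → F → ℝ} {μ : ℝ} {ystar : E → F} {x : E} (hμ : 0 < μ)
    (hg : ContDiffAt ℝ 2 (uncurry g) (x, ystar x))
    (hsc : ∀ᶠ x' in 𝓝 x, StrongConvexOn univ μ (g x'))
    (hmin : ∀ᶠ x' in 𝓝 x, IsMinOn (g x') univ (ystar x')) :
    (fun x' => ystar x' - ystar x) =O[𝓝 x] fun x' => x' - x := by
  have hdiff : ∀ᶠ x' in 𝓝 x, DifferentiableAt ℝ (g x') (ystar x) := by
    have hnear : ∀ᶠ p in 𝓝 (x, ystar x), DifferentiableAt ℝ (uncurry g) p :=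
      (hg.eventually (by simp)).mono fun _ hp => hp.differentiableAt two_ne_zero
    have hslice : Tendsto (fun x' => (x', ystar x)) (𝓝 x) (𝓝 (x, ystar x)) :=
      Continuous.tendsto (by fun_prop) x
    exact (hslice.eventually hnear).mono fun _ => differentiableAt_slice_right
  have hcrit : fderiv ℝ (g x) (ystar x) = 0 :=
    (hmin.self_of_nhds.isLocalMin univ_mem).fderiv_eq_zero
  have hderiv : DifferentiableAt ℝ (fun x' => fderiv ℝ (g x') (ystar x)) x :=
    (ContDiffAt.fderiv (g := fun _ => ystar x) (m := 1) hg contDiffAt_const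
      (by norm_num)).differentiableAt one_ne_zero
  have hlip : (fun x' => fderiv ℝ (g x') (ystar x)) =O[𝓝 x] fun x' => x' - x := by
    simpa only [hcrit, sub_zero] using hderiv.isBigO_sub
  exact (argmin_sub_isBigO_fderiv_of_strongConvexOn hμ hsc (.of_forall fun _ => mem_univ _) hmin
    (mem_univ (ystar x)) (hdiff.mono fun _ hx' => hx'.hasFDerivAt)).trans hlip

end StrongConvexity

section Gradient

variable {F : Type*} [NormedAddCommGroup F] [InnerProductSpace ℝ F] [CompleteSpace F]

theorem gradient_eq_zero_of_isLocalMin_s2 {h : F → ℝ} {y : F} (hmin : IsLocalMin h y) :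
    ∇ h y = 0 := by
  rw [gradient, hmin.fderiv_eq_zero, map_zero]

theorem isSymmetric_of_hasFDerivAt_gradient {h : F → ℝ} {H : F →L[ℝ] F} {y : F}
    (hh : ∀ᶠ y' in 𝓝 y, DifferentiableAt ℝ h y') (hH : HasFDerivAt (∇ h) H y) :
    (H : F →ₗ[ℝ] F).IsSymmetric := fun a b => by
  have hderiv : HasFDerivAt (fderiv ℝ h) (innerSL ℝ ∘L H) y := by
    rw [← toDual_comp_gradient]
    exact (innerSL ℝ).hasFDerivAt.comp y hH
  have hsymm : ⟪H a, b⟫ = ⟪H b, a⟫ :=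
    second_derivative_symmetric_of_eventually (hh.mono fun _ h => h.hasFDerivAt) hderiv a b
  exact hsymm.trans (real_inner_comm a (H b))

theorem differentiableAt_gradient_snd {E : Type*} [NormedAddCommGroup E] [NormedSpace ℝ E]
    {g : E → F → ℝ} {p : E × F} (hg : ContDiffAt ℝ 2 (uncurry g) p) :
    DifferentiableAt ℝ (fun q : E × F => ∇ (g q.1) q.2) p := by
  have hfderiv : ContDiffAt ℝ 1 (fun q : E × F => fderiv ℝ (g q.1) q.2) p :=
    ContDiffAt.fderiv (f := fun q : E × F => g q.1) (n := 2)
      (hg.comp (p, p.2) (contDiffAt_fst.fst.prodMk contDiffAt_snd)) contDiffAt_snd (by norm_num)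
  exact (toDual ℝ F).symm.differentiableAt.comp p (hfderiv.differentiableAt one_ne_zero)

end Gradient

section HyperGradient

variable {E F : Type*} [NormedAddCommGroup E] [InnerProductSpace ℝ E] [CompleteSpace E]
  [NormedAddCommGroup F] [InnerProductSpace ℝ F] [CompleteSpace F]
  {f g : E → F → ℝ} {x : E} {v : F} {Gyx : E →L[ℝ] F} {Gyy : F →L[ℝ] F}

/-- The Lagrangian of minimizing `f` subject to the lower-level stationarity condition
`∇_y g(x, y) = 0`, with multiplier `-v`, as a function of the pair `(x, y)`. -/
def bilevelLagrangian (f g : E → F → ℝ) (v : F) (p : E × F) : ℝ :=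
  f p.1 p.2 - ⟪v, ∇ (g p.1) p.2⟫

theorem hasFDerivAt_bilevelLagrangian {y : F} (hf : DifferentiableAt ℝ (uncurry f) (x, y))
    (hg : ContDiffAt ℝ 2 (uncurry g) (x, y))
    (hGyx : HasFDerivAt (fun x' => ∇ (g x') y) Gyx x) (hGyy : HasFDerivAt (∇ (g x)) Gyy y)
    (hv : Gyy v = ∇ (f x) y) :
    HasFDerivAt (bilevelLagrangian f g v)
      (toDual ℝ E (∇ (fun x' => f x' y) x - Gyx.adjoint v) ∘L .fst ℝ E F) (x, y) := by
  have hfx : HasGradientAt (fun x' => f x' y) (∇ (fun x' => f x' y) x) x :=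
    (differentiableAt_slice_left hf).hasGradientAt
  have hfy : HasGradientAt (f x) (∇ (f x) y) y :=
    (differentiableAt_slice_right hf).hasGradientAt
  have hGyy_symm : (Gyy : F →ₗ[ℝ] F).IsSymmetric := by
    refine isSymmetric_of_hasFDerivAt_gradient ?_ hGyy
    have hgy : ContDiffAt ℝ 2 (g x) y := hg.comp y (contDiffAt_const.prodMk contDiffAt_id)
    exact (hgy.eventually (by simp)).mono fun _ h => h.differentiableAt two_ne_zero
  have hLx := hfx.hasFDerivAt.sub ((innerSL ℝ v).hasFDerivAt.comp x hGyx)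
  have hLy := hfy.hasFDerivAt.sub ((innerSL ℝ v).hasFDerivAt.comp y hGyy)
  have hL : DifferentiableAt ℝ (bilevelLagrangian f g v) (x, y) :=
    hf.sub ((differentiableAt_const v).inner ℝ (differentiableAt_gradient_snd hg))
  have hAx : toDual ℝ E (∇ (fun x' => f x' y) x) - innerSL ℝ v ∘L Gyx =
      toDual ℝ E (∇ (fun x' => f x' y) x - Gyx.adjoint v) := by
    ext a
    simp [ContinuousLinearMap.adjoint_inner_left]
  have hAy : toDual ℝ F (∇ (f x) y) - innerSL ℝ v ∘L Gyy = 0 := by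
    ext b
    simpa [← hv, sub_eq_zero] using hGyy_symm v b
  have hcoprod := hasFDerivAt_coprod_of_partial hL (hLx.congr_fderiv hAx) (hLy.congr_fderiv hAy)
  simpa only [← ContinuousLinearMap.comp_fst_add_comp_snd, ContinuousLinearMap.zero_comp,
    add_zero] using hcoprod

theorem stmt_2_general {μ : ℝ} {ystar : E → F}
    (hf : DifferentiableAt ℝ (uncurry f) (x, ystar x))
    (hg : ContDiffAt ℝ 2 (uncurry g) (x, ystar x)) (hμ : 0 < μ)
    (hsc : ∀ᶠ x' in 𝓝 x, StrongConvexOn univ μ (g x'))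
    (hystar : ∀ᶠ x' in 𝓝 x, IsMinOn (g x') univ (ystar x'))
    (hGyx : HasFDerivAt (fun x' => ∇ (g x') (ystar x)) Gyx x)
    (hGyy : HasFDerivAt (∇ (g x)) Gyy (ystar x))
    (hv : Gyy v = ∇ (f x) (ystar x)) :
    HasGradientAt (fun x' => f x' (ystar x'))
      (∇ (fun x' => f x' (ystar x)) x - Gyx.adjoint v) x := by
  have hlagrangian : HasGradientAt (fun x' => bilevelLagrangian f g v (x', ystar x'))
      (∇ (fun x' => f x' (ystar x)) x - Gyx.adjoint v) x :=
    hasFDerivAt_comp_graph_of_isBigO (hasFDerivAt_bilevelLagrangian hf hg hGyx hGyy hv)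
      (argmin_sub_isBigO_sub_of_strongConvexOn hμ hg hsc hystar)
  refine hlagrangian.congr_of_eventuallyEq ?_
  filter_upwards [hystar] with x' hx'
  simp [bilevelLagrangian, gradient_eq_zero_of_isLocalMin_s2 (hx'.isLocalMin univ_mem)]

end HyperGradient

/-- Under Assumptions A1 and A2, the implicit objective `ℓ(x) = f(x, y*(x))` is
differentiable with gradient `∇ℓ(x) = ∇ₓ f(x, y*(x)) − (∇²_{yx} g(x, y*(x)))ᵀ v*(x)`, where
`v*(x)` solves `∇²_{yy} g(x, y*(x)) v*(x) = ∇_y f(x, y*(x))`. -/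
theorem stmt_2 {n m : ℕ} (f g : Vec n → Vec m → ℝ)
    -- Assumption A1
    (hf : ContDiff ℝ 1 (Function.uncurry f))
    (Cxf Cyf : ℝ) (hCxf : 0 < Cxf) (hCyf : 0 < Cyf)
    (hfxB : ∀ x y, ‖gradx f x y‖ ≤ Cxf)
    (hfyB : ∀ x y, ‖grady f x y‖ ≤ Cyf)
    (Lxf Lyf : ℝ≥0)
    (hfxL : LipschitzWith Lxf fun p : Vec n × Vec m => gradx f p.1 p.2)
    (hfyL : LipschitzWith Lyf fun p : Vec n × Vec m => grady f p.1 p.2)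
    -- Assumption A2
    (hg : ContDiff ℝ 2 (Function.uncurry g))
    (μg : ℝ) (hμg : 0 < μg)
    (hsc : ∀ x, StrongConvexOn Set.univ μg (g x))
    (Lyyg Lyxg : ℝ≥0)
    (hgyLy : ∀ x, LipschitzWith Lyyg fun y => grady g x y)
    (hgyLx : ∀ y, LipschitzWith Lyxg fun x => grady g x y)
    (Gyx : Vec n → Vec m → Vec n →L[ℝ] Vec m)
    (Gyy : Vec n → Vec m → Vec m →L[ℝ] Vec m)
    (hGyx : ∀ x y, HasFDerivAt (fun x' => grady g x' y) (Gyx x y) x)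
    (hGyy : ∀ x y, HasFDerivAt (fun y' => grady g x y') (Gyy x y) y)
    (Cyxg Cyyg : ℝ≥0)
    (hGyxL : LipschitzWith Cyxg fun p : Vec n × Vec m => Gyx p.1 p.2)
    (hGyyL : LipschitzWith Cyyg fun p : Vec n × Vec m => Gyy p.1 p.2)
    -- the lower-level solution map and `v*`
    (ystar : Vec n → Vec m)
    (hystar : ∀ x, IsMinOn (g x) Set.univ (ystar x))
    (vstar : Vec n → Vec m)
    (hvstar : ∀ x, Gyy x (ystar x) (vstar x) = grady f x (ystar x)) :
    ∀ x, HasGradientAt (fun x' => f x' (ystar x'))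
      (gradx f x (ystar x) - ContinuousLinearMap.adjoint (Gyx x (ystar x)) (vstar x)) x := by
  exact fun x => stmt_2_general (hf.differentiable one_ne_zero (x, ystar x)) hg.contDiffAt hμg
    (.of_forall hsc) (.of_forall hystar) (hGyx x (ystar x)) (hGyy x (ystar x)) (hvstar x)

end
end

section
/- Fix (x,y) ∈ ℝⁿ × ℝᵐ and α > 0. If (u,v) = (0,0) is a minimizer of QP (SF) at (x,y), then there exists λ ∈ ℝᵐ such that the KKT conditions of the single-level reduction hold at (x,y): ∇_x f(x,y) + ∇²_{yx} g(x,y)ᵀ λ = 0, ∇_y f(x,y) + ∇²_{yy} g(x,y) λ = 0, and ∇_y g(x,y) = 0. -/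
open Set MeasureTheory
open scoped NNReal RealInnerProductSpace

noncomputable section

/-!
The objective is half the squared distance from `(u, v)` to `-∇f`, so `(0, 0)` minimizes it over the
kernel of the row `(∇²_{yx} g, ∇²_{yy} g)` exactly when `∇f` is orthogonal to that kernel. When the
row has closed range, the orthogonal complement of its kernel is the range of its adjoint, and a
preimage of `-∇f` under the adjoint is the multiplier; symmetry of `∇²_{yy} g` removes the transpose
from the second block. Feasibility of `(0, 0)` forces `∇_y g = 0`.
-/

section KKT

open scoped Gradient InnerProduct Topology

section HilbertSpace

variable {𝕜 E F : Type*} [RCLike 𝕜] [NormedAddCommGroup E] [InnerProductSpace 𝕜 E]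
  [NormedAddCommGroup F] [InnerProductSpace 𝕜 F]

theorem mem_orthogonal_of_forall_norm_le {K : Submodule 𝕜 E} {c : E}
    (hc : ∀ z ∈ K, ‖c‖ ≤ ‖z + c‖) : c ∈ Kᗮ := by
  have hdist : ‖c - 0‖ = ⨅ w : K, ‖c - w‖ := by
    refine le_antisymm (le_ciInf fun w => ?_) (ciInf_le ⟨0, ?_⟩ (0 : K))
    · simpa [neg_add_eq_sub] using hc (-w) (neg_mem w.2)
    · rintro _ ⟨w, rfl⟩
      exact norm_nonneg _
  rw [Submodule.mem_orthogonal']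
  simpa using (K.norm_eq_iInf_iff_inner_eq_zero K.zero_mem).1 hdist

variable [CompleteSpace E] [CompleteSpace F]

theorem exists_antilipschitzWith_adjoint_of_range_eq_top (T : E →L[𝕜] F) (hT : T.range = ⊤) :
    ∃ C, AntilipschitzWith C (T†) := by
  obtain ⟨S, -⟩ := T.exists_nonlinearRightInverse_of_surjective hT
  refine ⟨S.nnnorm, AddMonoidHomClass.antilipschitz_of_bound _ fun w => ?_⟩
  have hsq : ‖w‖ * ‖w‖ ≤ S.nnnorm * ‖(T†) w‖ * ‖w‖ := calc
    ‖w‖ * ‖w‖ = ‖inner 𝕜 ((T†) w) (S w)‖ := by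
      rw [T.adjoint_inner_left, S.right_inv, inner_self_eq_norm_sq_to_K, norm_pow,
        RCLike.norm_ofReal, abs_norm, sq]
    _ ≤ ‖(T†) w‖ * ‖S w‖ := norm_inner_le_norm _ _
    _ ≤ ‖(T†) w‖ * (S.nnnorm * ‖w‖) := by gcongr; exact S.bound w
    _ = S.nnnorm * ‖(T†) w‖ * ‖w‖ := by ring
  rcases (norm_nonneg w).eq_or_lt with hw | hw
  · rw [← hw]; positivity
  · exact le_of_mul_le_mul_right hsq hw

theorem isClosed_range_adjoint (T : E →L[𝕜] F) (hT : IsClosed (T.range : Set F)) :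
    IsClosed ((T†).range : Set E) := by
  have : CompleteSpace T.range := hT.completeSpace_coe
  -- Corestricting to the range reduces to the surjective case without changing the adjoint's range.
  let R : E →L[𝕜] T.range := T.rangeRestrict
  have hR : R.range = ⊤ := LinearMap.range_eq_top.2 T.toLinearMap.surjective_rangeRestrict
  obtain ⟨C, hC⟩ := exists_antilipschitzWith_adjoint_of_range_eq_top R hR
  have hadj : T† = R† ∘L T.range.subtypeL† := by
    rw [← ContinuousLinearMap.adjoint_comp]
    rfl
  have hrange : (T†).range = (R†).range := by
    rw [hadj]
    refine LinearMap.range_comp_of_range_eq_top _ (LinearMap.range_eq_top.2 fun z => ⟨z, ?_⟩)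
    simp [Submodule.adjoint_subtypeL]
  rw [hrange]
  exact hC.isClosed_range (R†).uniformContinuous

theorem orthogonal_ker_eq_range_adjoint (T : E →L[𝕜] F) (hT : IsClosed (T.range : Set F)) :
    T.kerᗮ = (T†).range := by
  rw [T.orthogonal_ker, (isClosed_range_adjoint T hT).submodule_topologicalClosure_eq]

end HilbertSpace

section Multiplier

variable {X Y Z : Type*}
  [NormedAddCommGroup X] [InnerProductSpace ℝ X]
  [NormedAddCommGroup Y] [InnerProductSpace ℝ Y]
  [NormedAddCommGroup Z] [InnerProductSpace ℝ Z]

/-- The block operator `(A B) : (u, v) ↦ A u + B v`, whose kernel is the feasible set of the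
quadratic program where `∇_y g` vanishes. Its domain is the `ℓ²` product, since `X × Y` carries the
sup norm and hence no inner product. -/
def blockRow (A : X →L[ℝ] Z) (B : Y →L[ℝ] Z) : WithLp 2 (X × Y) →L[ℝ] Z :=
  A.coprod B ∘L WithLp.prodContinuousLinearEquiv 2 ℝ X Y

theorem blockRow_apply (A : X →L[ℝ] Z) (B : Y →L[ℝ] Z) (p : WithLp 2 (X × Y)) :
    blockRow A B p = A p.fst + B p.snd :=
  rfl

theorem range_blockRow (A : X →L[ℝ] Z) (B : Y →L[ℝ] Z) :
    (blockRow A B).range = (A.coprod B).range :=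
  LinearMap.range_comp_of_range_eq_top _
    (LinearMap.range_eq_top.2 (WithLp.prodContinuousLinearEquiv 2 ℝ X Y).surjective)

variable [CompleteSpace X] [CompleteSpace Y] [CompleteSpace Z]

theorem adjoint_blockRow_apply (A : X →L[ℝ] Z) (B : Y →L[ℝ] Z) (z : Z) :
    ((blockRow A B)†) z = WithLp.toLp 2 ((A†) z, (B†) z) := by
  refine ext_inner_right ℝ fun p => ?_
  simp only [ContinuousLinearMap.adjoint_inner_left, blockRow_apply, WithLp.prod_inner_apply,
    inner_add_right, WithLp.fst, WithLp.snd]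

theorem exists_add_adjoint_eq_zero_of_forall_norm_sq_le {A : X →L[ℝ] Z} {B : Y →L[ℝ] Z}
    (hAB : IsClosed ((A.coprod B).range : Set Z)) {a : X} {b : Y}
    (hmin : ∀ u v, A u + B v = 0 → ‖a‖ ^ 2 + ‖b‖ ^ 2 ≤ ‖u + a‖ ^ 2 + ‖v + b‖ ^ 2) :
    ∃ lam : Z, a + (A†) lam = 0 ∧ b + (B†) lam = 0 := by
  have hleast : ∀ p ∈ (blockRow A B).ker, ‖WithLp.toLp 2 (a, b)‖ ≤ ‖p + WithLp.toLp 2 (a, b)‖ := by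
    intro p hp
    rw [← sq_le_sq₀ (norm_nonneg _) (norm_nonneg _), WithLp.prod_norm_sq_eq_of_L2,
      WithLp.prod_norm_sq_eq_of_L2]
    exact hmin p.fst p.snd hp
  have hrange := mem_orthogonal_of_forall_norm_le hleast
  rw [orthogonal_ker_eq_range_adjoint _ (by rwa [range_blockRow])] at hrange
  obtain ⟨z, hz⟩ := hrange
  rw [ContinuousLinearMap.coe_coe, adjoint_blockRow_apply] at hz
  obtain ⟨rfl, rfl⟩ := Prod.mk.inj (WithLp.toLp_injective 2 hz)
  exact ⟨-z, by simp, by simp⟩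

end Multiplier

theorem isSelfAdjoint_of_hasFDerivAt_gradient_s4 {E : Type*} [NormedAddCommGroup E]
    [InnerProductSpace ℝ E] [CompleteSpace E] {φ : E → ℝ} {φ' : E → E} {H : E →L[ℝ] E} {y : E}
    (hφ : ∀ᶠ z in 𝓝 y, HasGradientAt φ (φ' z) z) (hH : HasFDerivAt φ' H y) :
    IsSelfAdjoint H := by
  have hsnd : HasFDerivAt (fun z => innerSL ℝ (φ' z)) (innerSL ℝ ∘L H) y :=
    (innerSL ℝ).hasFDerivAt.comp y hH
  refine ContinuousLinearMap.isSelfAdjoint_iff_isSymmetric.2 fun v w => ?_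
  have hsymm : inner ℝ (H v) w = inner ℝ (H w) v :=
    second_derivative_symmetric_of_eventually (hφ.mono fun z hz => hz.hasFDerivAt) hsnd v w
  exact hsymm.trans (real_inner_comm _ _)

theorem stmt_4_general {X Y : Type*}
    [NormedAddCommGroup X] [InnerProductSpace ℝ X] [CompleteSpace X]
    [NormedAddCommGroup Y] [InnerProductSpace ℝ Y] [CompleteSpace Y]
    {f g : X → Y → ℝ} {x : X} {y : Y} {Gyx : X →L[ℝ] Y} {Gyy : Y →L[ℝ] Y} {α : ℝ}
    (hf : DifferentiableAt ℝ (Function.uncurry f) (x, y))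
    (hg : ∀ᶠ p in 𝓝 (x, y), DifferentiableAt ℝ (Function.uncurry g) p)
    (hGyx : HasFDerivAt (fun x' => ∇ (g x') y) Gyx x) (hGyy : HasFDerivAt (∇ (g x)) Gyy y)
    (hclosed : IsClosed ((Gyx.coprod Gyy).range : Set Y)) (hα : α ≠ 0)
    (h0feas : Gyx 0 + Gyy 0 + α • ∇ (g x) y = 0)
    (h0min : ∀ u v, Gyx u + Gyy v + α • ∇ (g x) y = 0 →
      1 / 2 * ‖∇ (f · y) x‖ ^ 2 + 1 / 2 * ‖∇ (f x) y‖ ^ 2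
        ≤ 1 / 2 * ‖u + ∇ (f · y) x‖ ^ 2 + 1 / 2 * ‖v + ∇ (f x) y‖ ^ 2) :
    ∃ lam : Y, ∇ (f · y) x + (Gyx†) lam = 0 ∧ ∇ (f x) y + Gyy lam = 0 ∧ ∇ (g x) y = 0 := by
  have hgy : ∇ (g x) y = 0 := by simpa [hα] using h0feas
  have hgrad : ∀ᶠ y' in 𝓝 y, HasGradientAt (g x) (∇ (g x) y') y' :=
    hg.curry_nhds.self_of_nhds.mono fun y' hy' =>
      (hy'.comp y' (f := fun z => (x, z)) (by fun_prop)).hasGradientAt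
  have hself : Gyy† = Gyy := isSelfAdjoint_of_hasFDerivAt_gradient_s4 hgrad hGyy
  have hmin : ∀ u v, Gyx u + Gyy v = 0 →
      ‖∇ (f · y) x‖ ^ 2 + ‖∇ (f x) y‖ ^ 2
        ≤ ‖u + ∇ (f · y) x‖ ^ 2 + ‖v + ∇ (f x) y‖ ^ 2 := fun u v huv => by
    linarith [h0min u v (by simpa [hgy] using huv)]
  obtain ⟨lam, hx, hy⟩ := exists_add_adjoint_eq_zero_of_forall_norm_sq_le hclosed hmin
  exact ⟨lam, hx, hself ▸ hy, hgy⟩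

end KKT

/-- if `(u,v) = (0,0)` is a minimizer of the QP (SF) at `(x,y)`, then there exists a
multiplier `λ` such that the KKT conditions of the single-level reduction hold at `(x,y)`. -/
theorem stmt_4 {n m : ℕ} (f g : Vec n → Vec m → ℝ)
    (hf : ContDiff ℝ 1 (Function.uncurry f))
    (hg : ContDiff ℝ 2 (Function.uncurry g))
    (Gyx : Vec n → Vec m → Vec n →L[ℝ] Vec m)
    (Gyy : Vec n → Vec m → Vec m →L[ℝ] Vec m)
    (hGyx : ∀ x y, HasFDerivAt (fun x' => grady g x' y) (Gyx x y) x)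
    (hGyy : ∀ x y, HasFDerivAt (fun y' => grady g x y') (Gyy x y) y)
    (x : Vec n) (y : Vec m) (α : ℝ) (hα : 0 < α)
    -- `(0,0)` is feasible for QP (SF),
    (h0feas : Gyx x y (0 : Vec n) + Gyy x y (0 : Vec m) + α • grady g x y = 0)
    -- and `(0,0)` minimizes the objective among all feasible points.
    (h0min : ∀ u v, Gyx x y u + Gyy x y v + α • grady g x y = 0 →
      (1:ℝ)/2 * ‖(0 : Vec n) + gradx f x y‖ ^ 2 + (1:ℝ)/2 * ‖(0 : Vec m) + grady f x y‖ ^ 2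
        ≤ (1:ℝ)/2 * ‖u + gradx f x y‖ ^ 2 + (1:ℝ)/2 * ‖v + grady f x y‖ ^ 2) :
    ∃ lam : Vec m,
      gradx f x y + ContinuousLinearMap.adjoint (Gyx x y) lam = 0 ∧
      grady f x y + Gyy x y lam = 0 ∧
      grady g x y = 0 := by
  simp only [zero_add] at h0min
  exact stmt_4_general (hf.differentiable one_ne_zero _)
    (.of_forall (hg.differentiable two_ne_zero)) (hGyx x y) (hGyy x y)
    (Submodule.closed_of_finiteDimensional _) hα.ne' h0feas h0min

end
end

section
/- Let α > 0 and let t ↦ (x(t), y(t)), t ≥ 0, be a continuously differentiable solution of the safe gradient flow (SGF), under Assumptions A1 and A2. Then the trajectories are contracted towards the manifold M = {(x,y) : ∇_y g(x,y) = 0} exponentially fast: ‖∇_y g(x(t), y(t))‖ = e^{−α t} ‖∇_y g(x(0), y(0))‖ for all t ≥ 0. -/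
open Set MeasureTheory
open scoped NNReal RealInnerProductSpace

noncomputable section

/-!
The choice of multiplier makes the flow satisfy `∇²_{yx}g ẋ + ∇²_{yy}g ẏ = -α ∇_y g`. By the chain
rule the left-hand side is the time derivative of `w(t) = ∇_y g(x(t), y(t))`, so `w` solves the
linear equation `ẇ = -α w`, and uniqueness for this equation gives `w(t) = e^{-αt} w(0)`.
-/

section Calculus

variable {𝕜 E F G : Type*} [NontriviallyNormedField 𝕜]
  [NormedAddCommGroup E] [NormedSpace 𝕜 E] [NormedAddCommGroup F] [NormedSpace 𝕜 F]
  [NormedAddCommGroup G] [NormedSpace 𝕜 G]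

lemma hasFDerivAt_coprod_of_differentiableAt {h : E × F → G} {x : E} {y : F}
    {A : E →L[𝕜] G} {B : F →L[𝕜] G} (hd : DifferentiableAt 𝕜 h (x, y))
    (hA : HasFDerivAt (fun x' => h (x', y)) A x) (hB : HasFDerivAt (fun y' => h (x, y')) B y) :
    HasFDerivAt h (A.coprod B) (x, y) := by
  have hinl : (fderiv 𝕜 h (x, y)) ∘L ContinuousLinearMap.inl 𝕜 E F = A :=
    (hd.hasFDerivAt.comp (f := fun x' => (x', y)) x (hasFDerivAt_prodMk_left x y)).unique hA
  have hinr : (fderiv 𝕜 h (x, y)) ∘L ContinuousLinearMap.inr 𝕜 E F = B :=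
    (hd.hasFDerivAt.comp (f := fun y' => (x, y')) y (hasFDerivAt_prodMk_right x y)).unique hB
  rw [← hinl, ← hinr, ← ContinuousLinearMap.comp_coprod, ContinuousLinearMap.coprod_inl_inr,
    ContinuousLinearMap.comp_id]
  exact hd.hasFDerivAt

lemma map_velocity_eq_neg_smul_of_multiplier {A : E →L[𝕜] G} {B : F →L[𝕜] G}
    {A' : G →L[𝕜] E} {B' : G →L[𝕜] F} {u : E} {v : F} {w lam : G} {α : 𝕜}
    (hlam : (A ∘L A' + B ∘L B') lam = -(A u + B v - α • w)) :
    A (-u - A' lam) + B (-v - B' lam) = -α • w := by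
  simp only [add_apply, ContinuousLinearMap.comp_apply] at hlam
  simp only [map_sub, map_neg]
  linear_combination (norm := module) (-1 : 𝕜) • hlam

end Calculus

section PartialGradient

variable {E F : Type*} [NormedAddCommGroup E] [NormedSpace ℝ E]
  [NormedAddCommGroup F] [InnerProductSpace ℝ F] [CompleteSpace F]

lemma contDiff_partial_gradient {g : E → F → ℝ} {k l : WithTop ℕ∞}
    (hg : ContDiff ℝ l (Function.uncurry g)) (hkl : k + 1 ≤ l) :
    ContDiff ℝ k (Function.uncurry fun x => gradient (g x)) := by
  have hg' : ContDiff ℝ l (Function.uncurry fun (p : E × F) y => g p.1 y) :=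
    hg.comp (contDiff_fst.fst.prodMk contDiff_snd)
  exact (InnerProductSpace.toDual ℝ F).symm.contDiff.comp (hg'.fderiv contDiff_snd hkl)

end PartialGradient

section LinearODE

variable {F : Type*} [NormedAddCommGroup F] [NormedSpace ℝ F]

lemma eqOn_exp_smul_of_hasDerivWithinAt_smul {h : ℝ → F} {a b c : ℝ}
    (hcont : ContinuousOn h (Icc a b))
    (hderiv : ∀ t ∈ Ico a b, HasDerivWithinAt h (c • h t) (Ici t) t) :
    EqOn h (fun t => Real.exp (c * (t - a)) • h a) (Icc a b) := by
  have hexp (t : ℝ) : HasDerivAt (fun s => Real.exp (c * (s - a)) • h a)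
      (c • Real.exp (c * (t - a)) • h a) t := by
    have hlin : HasDerivAt (fun s => c * (s - a)) c t := by
      simpa using ((hasDerivAt_id t).sub_const a).const_mul c
    simpa only [smul_smul, mul_comm c] using hlin.exp.smul_const (h a)
  exact ODE_solution_unique (v := fun _ u => c • u) (fun _ => lipschitzWith_smul c) hcont hderiv
    (fun t _ => (hexp t).continuousAt.continuousWithinAt)
    (fun t _ => (hexp t).hasDerivWithinAt) (by simp)

end LinearODE

section SafeGradientFlow

variable {E F : Type*} [NormedAddCommGroup E] [InnerProductSpace ℝ E] [CompleteSpace E]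
  [NormedAddCommGroup F] [InnerProductSpace ℝ F] [CompleteSpace F]

/- `(u, v)` is the nominal vector field, `(∇ₓf, ∇_y f)` in the safe gradient flow of `f`. -/
theorem stmt_5_general {g : E → F → ℝ} (hg : ContDiff ℝ 2 (Function.uncurry g))
    {Gyx : E → F → E →L[ℝ] F} {Gyy : E → F → F →L[ℝ] F}
    (hGyx : ∀ x y, HasFDerivAt (fun x' => gradient (g x') y) (Gyx x y) x)
    (hGyy : ∀ x y, HasFDerivAt (gradient (g x)) (Gyy x y) y)
    {u : E → F → E} {v : E → F → F} {α : ℝ} {x : ℝ → E} {y lam : ℝ → F}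
    (hlam : ∀ t, 0 ≤ t →
      (Gyx (x t) (y t) ∘L ContinuousLinearMap.adjoint (Gyx (x t) (y t))
        + Gyy (x t) (y t) ∘L Gyy (x t) (y t)) (lam t)
      = -(Gyx (x t) (y t) (u (x t) (y t)) + Gyy (x t) (y t) (v (x t) (y t))
          - α • gradient (g (x t)) (y t)))
    (hx : ∀ t, 0 ≤ t → HasDerivWithinAt x
      (-u (x t) (y t) - ContinuousLinearMap.adjoint (Gyx (x t) (y t)) (lam t)) (Ici 0) t)
    (hy : ∀ t, 0 ≤ t → HasDerivWithinAt y
      (-v (x t) (y t) - Gyy (x t) (y t) (lam t)) (Ici 0) t)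
    {t : ℝ} (ht : 0 ≤ t) :
    gradient (g (x t)) (y t) = Real.exp (-α * t) • gradient (g (x 0)) (y 0) := by
  have hdiff : Differentiable ℝ (Function.uncurry fun x => gradient (g x)) :=
    (contDiff_partial_gradient hg one_add_one_eq_two.le).differentiable one_ne_zero
  have hdecay (s : ℝ) (hs : 0 ≤ s) : HasDerivWithinAt (fun s => gradient (g (x s)) (y s))
      (-α • gradient (g (x s)) (y s)) (Ici 0) s := by
    have hchain := (hasFDerivAt_coprod_of_differentiableAt (hdiff (x s, y s)) (hGyx _ _)
      (hGyy _ _)).comp_hasDerivWithinAt s ((hx s hs).prodMk (hy s hs))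
    exact hchain.congr_deriv (map_velocity_eq_neg_smul_of_multiplier (hlam s hs))
  have hsol := eqOn_exp_smul_of_hasDerivWithinAt_smul (b := t)
    (fun s hs => (hdecay s hs.1).continuousWithinAt.mono Icc_subset_Ici_self)
    (fun s hs => (hdecay s hs.1).mono (Ici_subset_Ici.2 hs.1))
  simpa only [sub_zero] using hsol (right_mem_Icc.2 ht)

end SafeGradientFlow

/-- along the safe gradient flow (SGF), trajectories contract towards the manifold
`M = {(x,y) : ∇_y g(x,y) = 0}` exponentially fast:
`‖∇_y g(x(t), y(t))‖ = e^{−α t} ‖∇_y g(x(0), y(0))‖` for all `t ≥ 0`. -/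
theorem stmt_5 {n m : ℕ} (f g : Vec n → Vec m → ℝ)
    -- Assumption A1
    (hf : ContDiff ℝ 1 (Function.uncurry f))
    (Cxf Cyf : ℝ) (hCxf : 0 < Cxf) (hCyf : 0 < Cyf)
    (hfxB : ∀ x y, ‖gradx f x y‖ ≤ Cxf)
    (hfyB : ∀ x y, ‖grady f x y‖ ≤ Cyf)
    (Lxf Lyf : ℝ≥0)
    (hfxL : LipschitzWith Lxf fun p : Vec n × Vec m => gradx f p.1 p.2)
    (hfyL : LipschitzWith Lyf fun p : Vec n × Vec m => grady f p.1 p.2)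
    -- Assumption A2
    (hg : ContDiff ℝ 2 (Function.uncurry g))
    (μg : ℝ) (hμg : 0 < μg)
    (hsc : ∀ x, StrongConvexOn Set.univ μg (g x))
    (Lyyg Lyxg : ℝ≥0)
    (hgyLy : ∀ x, LipschitzWith Lyyg fun y => grady g x y)
    (hgyLx : ∀ y, LipschitzWith Lyxg fun x => grady g x y)
    (Gyx : Vec n → Vec m → Vec n →L[ℝ] Vec m)
    (Gyy : Vec n → Vec m → Vec m →L[ℝ] Vec m)
    (hGyx : ∀ x y, HasFDerivAt (fun x' => grady g x' y) (Gyx x y) x)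
    (hGyy : ∀ x y, HasFDerivAt (fun y' => grady g x y') (Gyy x y) y)
    (Cyxg Cyyg : ℝ≥0)
    (hGyxL : LipschitzWith Cyxg fun p : Vec n × Vec m => Gyx p.1 p.2)
    (hGyyL : LipschitzWith Cyyg fun p : Vec n × Vec m => Gyy p.1 p.2)
    -- the safe gradient flow (SGF) for a parameter `α > 0`, on the time interval `t ≥ 0`:
    -- `lam t` is the dual multiplier `λ(x(t), y(t))`, characterized as the solution of
    -- `(∇²_{yx}g (∇²_{yx}g)ᵀ + (∇²_{yy}g)²) λ = −(∇²_{yx}g ∇ₓf + ∇²_{yy}g ∇_y f − α ∇_y g)`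
    (α : ℝ) (hα : 0 < α)
    (x : ℝ → Vec n) (y : ℝ → Vec m) (lam : ℝ → Vec m)
    (hlam : ∀ t, 0 ≤ t →
      (Gyx (x t) (y t) ∘L ContinuousLinearMap.adjoint (Gyx (x t) (y t))
        + Gyy (x t) (y t) ∘L Gyy (x t) (y t)) (lam t)
      = -(Gyx (x t) (y t) (gradx f (x t) (y t)) + Gyy (x t) (y t) (grady f (x t) (y t))
          - α • grady g (x t) (y t)))
    (hx : ∀ t, 0 ≤ t → HasDerivAt x
      (-gradx f (x t) (y t) - ContinuousLinearMap.adjoint (Gyx (x t) (y t)) (lam t)) t)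
    (hy : ∀ t, 0 ≤ t → HasDerivAt y
      (-grady f (x t) (y t) - Gyy (x t) (y t) (lam t)) t)
    :
    ∀ t, 0 ≤ t →
      ‖grady g (x t) (y t)‖ = Real.exp (-α * t) * ‖grady g (x 0) (y 0)‖ := by
  intro t ht
  have hdecay : grady g (x t) (y t) = Real.exp (-α * t) • grady g (x 0) (y 0) :=
    stmt_5_general hg hGyx hGyy hlam (fun s hs => (hx s hs).hasDerivWithinAt)
      (fun s hs => (hy s hs).hasDerivWithinAt) ht
  rw [hdecay, norm_smul, Real.norm_of_nonneg (Real.exp_pos _).le]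

end
end

section
/- Let α > 0 and let t ↦ (x(t), y(t)), t ≥ 0, be a continuously differentiable solution of the safe gradient flow (SGF), under Assumptions A1 and A2. Then the dual multiplier is uniformly bounded along the trajectory: ‖λ(x(t), y(t))‖ ≤ (1/μ_g²) (C_{yx}^g C_x^f + C_{yy}^g C_y^f + α ‖∇_y g(x(0), y(0))‖) for all t ≥ 0. -/
open Set MeasureTheory
open scoped NNReal RealInnerProductSpace

noncomputable section

/-! The multiplier is chosen so that `∇_y g` obeys `ẇ = -α w` along the flow; hence
`‖∇_y g(x(t), y(t))‖ ≤ ‖∇_y g(x(0), y(0))‖`. Strong convexity makes the Hessian block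
`B = ∇²_{yy} g` coercive, `μ ‖l‖² ≤ ⟪B l, l⟫`, and `B` is symmetric, so with `A = ∇²_{yx} g`
`⟪(A Aᵀ + B²) l, l⟫ = ‖Aᵀ l‖² + ‖B l‖² ≥ μ² ‖l‖²`. Thus `‖λ‖` is at most `μ⁻²` times the norm of the
right-hand side of the linear equation that defines `λ`.
-/

section Hessian

variable {E : Type*} [NormedAddCommGroup E] [NormedSpace ℝ E]
  {H : Type*} [NormedAddCommGroup H] [InnerProductSpace ℝ H]

lemma convexOn_hasFDerivAt_apply_sub_le {s : Set E} {φ : E → ℝ} {a b : E} {φa' φb' : E →L[ℝ] ℝ}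
    (hφ : ConvexOn ℝ s φ) (ha : a ∈ s) (hb : b ∈ s)
    (hφa : HasFDerivAt φ φa' a) (hφb : HasFDerivAt φ φb' b) :
    φa' (b - a) ≤ φb' (b - a) := by
  let γ : ℝ →ᵃ[ℝ] E := AffineMap.lineMap a b
  have hγ (r : ℝ) : HasDerivAt γ (b - a) r := AffineMap.hasDerivAt_lineMap
  have hconv : ConvexOn ℝ (γ ⁻¹' s) (φ ∘ γ) := hφ.comp_affineMap γ
  have h0 : γ 0 = a := AffineMap.lineMap_apply_zero a b
  have h1 : γ 1 = b := AffineMap.lineMap_apply_one a b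
  have hmem0 : (0 : ℝ) ∈ γ ⁻¹' s := by rwa [mem_preimage, h0]
  have hmem1 : (1 : ℝ) ∈ γ ⁻¹' s := by rwa [mem_preimage, h1]
  have hder0 : HasDerivAt (φ ∘ γ) (φa' (b - a)) 0 :=
    HasFDerivAt.comp_hasDerivAt 0 (h0.symm ▸ hφa) (hγ 0)
  have hder1 : HasDerivAt (φ ∘ γ) (φb' (b - a)) 1 :=
    HasFDerivAt.comp_hasDerivAt 1 (h1.symm ▸ hφb) (hγ 1)
  exact (hconv.le_slope_of_hasDerivAt hmem0 hmem1 one_pos hder0).trans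
    (hconv.slope_le_of_hasDerivAt hmem0 hmem1 one_pos hder1)

lemma mul_norm_sq_le_inner_of_hasFDerivAt {F : H → H} {F' : H →L[ℝ] H} {y : H} {μ : ℝ}
    (hF : ∀ z, μ * ‖z - y‖ ^ 2 ≤ ⟪F z - F y, z - y⟫) (hF' : HasFDerivAt F F' y) (u : H) :
    μ * ‖u‖ ^ 2 ≤ ⟪F' u, u⟫ := by
  have hlim : Filter.Tendsto (fun c : ℝ => ⟪c • (F (y + c⁻¹ • u) - F y), u⟫) Filter.atTop
      (nhds ⟪F' u, u⟫) := (hF'.lim_real u).inner tendsto_const_nhds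
  refine ge_of_tendsto hlim ?_
  filter_upwards [Filter.eventually_gt_atTop 0] with c hc
  have hquot := mul_le_mul_of_nonneg_left (hF (y + c⁻¹ • u)) (sq_nonneg c)
  rw [add_sub_cancel_left, norm_smul, Real.norm_of_nonneg (inv_pos.2 hc).le,
    real_inner_smul_right] at hquot
  rw [real_inner_smul_left]
  calc μ * ‖u‖ ^ 2 = c ^ 2 * (μ * (c⁻¹ * ‖u‖) ^ 2) := by field_simp
    _ ≤ c ^ 2 * (c⁻¹ * ⟪F (y + c⁻¹ • u) - F y, u⟫) := hquot
    _ = c * ⟪F (y + c⁻¹ • u) - F y, u⟫ := by rw [sq, mul_assoc, mul_inv_cancel_left₀ hc.ne']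

variable [CompleteSpace H]

lemma mul_norm_sub_sq_le_inner_of_strongConvexOn {s : Set H} {φ : H → ℝ} {μ : ℝ} {a b ga gb : H}
    (hφ : StrongConvexOn s μ φ) (ha : a ∈ s) (hb : b ∈ s)
    (hga : HasGradientAt φ ga a) (hgb : HasGradientAt φ gb b) :
    μ * ‖b - a‖ ^ 2 ≤ ⟪gb - ga, b - a⟫ := by
  have hder {z g : H} (hg : HasGradientAt φ g z) :=
    hg.hasFDerivAt.sub ((hasStrictFDerivAt_norm_sq z).hasFDerivAt.const_mul (μ / 2))
  have hmono := convexOn_hasFDerivAt_apply_sub_le (strongConvexOn_iff_convex.1 hφ) ha hb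
    (hder hga) (hder hgb)
  simp only [sub_apply, smul_apply, InnerProductSpace.toDual_apply_apply, coe_innerSL_apply,
    smul_eq_mul, nsmul_eq_mul, Nat.cast_ofNat] at hmono
  rw [← real_inner_self_eq_norm_sq, inner_sub_left gb, inner_sub_left b]
  linarith

lemma mul_norm_sq_le_inner_hessian {φ : H → ℝ} {μ : ℝ} {B : H →L[ℝ] H} {y : H}
    (hφ : Differentiable ℝ φ) (hsc : StrongConvexOn univ μ φ)
    (hB : HasFDerivAt (gradient φ) B y) (u : H) :
    μ * ‖u‖ ^ 2 ≤ ⟪B u, u⟫ :=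
  mul_norm_sq_le_inner_of_hasFDerivAt
    (fun z => mul_norm_sub_sq_le_inner_of_strongConvexOn hsc (mem_univ y) (mem_univ z)
      (hφ y).hasGradientAt (hφ z).hasGradientAt) hB u

lemma isSymmetric_hessian {φ : H → ℝ} {B : H →L[ℝ] H} {y : H}
    (hφ : Differentiable ℝ φ) (hB : HasFDerivAt (gradient φ) B y) :
    (B : H →ₗ[ℝ] H).IsSymmetric := by
  intro u v
  let toDual := (InnerProductSpace.toDual ℝ H).toContinuousLinearEquiv.toContinuousLinearMap
  have hsecond : HasFDerivAt (fderiv ℝ φ) (toDual ∘L B) y := by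
    rw [← toDual_comp_gradient]
    exact toDual.hasFDerivAt.comp y hB
  calc ⟪B u, v⟫ = ⟪B v, u⟫ :=
        second_derivative_symmetric (fun z => (hφ z).hasFDerivAt) hsecond u v
    _ = ⟪u, B v⟫ := real_inner_comm u (B v)

lemma contDiff_uncurry_gradient {k l : WithTop ℕ∞} {g : E → H → ℝ}
    (hg : ContDiff ℝ k (Function.uncurry g)) (hlk : l + 1 ≤ k) :
    ContDiff ℝ l (Function.uncurry fun x y => gradient (g x) y) := by
  have hfderiv : ContDiff ℝ l fun p : E × H => fderiv ℝ (g p.1) p.2 :=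
    ContDiff.fderiv (f := fun p : E × H => g p.1)
      (hg.comp ((contDiff_fst.comp contDiff_fst).prodMk contDiff_snd)) contDiff_snd hlk
  exact (InnerProductSpace.toDual ℝ H).symm.toContinuousLinearEquiv.contDiff.comp hfderiv

end Hessian

section Trajectory

variable {E F G : Type*} [NormedAddCommGroup E] [NormedSpace ℝ E] [NormedAddCommGroup F]
  [NormedSpace ℝ F] [NormedAddCommGroup G] [NormedSpace ℝ G]

lemma hasDerivWithinAt_comp_of_partial {Φ : E → F → G} {x : ℝ → E} {y : ℝ → F} {x' : E} {y' : F}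
    {A : E →L[ℝ] G} {B : F →L[ℝ] G} {s : Set ℝ} {t : ℝ}
    (hΦ : DifferentiableAt ℝ (Function.uncurry Φ) (x t, y t))
    (hA : HasFDerivAt (fun e => Φ e (y t)) A (x t)) (hB : HasFDerivAt (Φ (x t)) B (y t))
    (hx : HasDerivWithinAt x x' s t) (hy : HasDerivWithinAt y y' s t) :
    HasDerivWithinAt (fun r => Φ (x r) (y r)) (A x' + B y') s t := by
  let D := fderiv ℝ (Function.uncurry Φ) (x t, y t)
  have hD : HasFDerivAt (Function.uncurry Φ) D (x t, y t) := hΦ.hasFDerivAt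
  have hDA : D ∘L ContinuousLinearMap.inl ℝ E F = A :=
    (HasFDerivAt.comp (f := fun e => (e, y t)) (x t) hD (hasFDerivAt_prodMk_left _ _)).unique hA
  have hDB : D ∘L ContinuousLinearMap.inr ℝ E F = B :=
    (HasFDerivAt.comp (f := fun e => (x t, e)) (y t) hD (hasFDerivAt_prodMk_right _ _)).unique hB
  have hsplit : D (x', y') = A x' + B y' := by
    rw [← hDA, ← hDB, D.comp_inl_add_comp_inr (x', y')]
  rw [← hsplit]
  exact hD.comp_hasDerivWithinAt t (hx.prodMk hy)

lemma eq_exp_smul_of_hasDerivWithinAt_neg_smul {w : ℝ → E} {α : ℝ}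
    (hw : ∀ t, 0 ≤ t → HasDerivWithinAt w (-(α • w t)) (Ici 0) t) {t : ℝ} (ht : 0 ≤ t) :
    w t = Real.exp (-(α * t)) • w 0 := by
  have hderiv (r : ℝ) (hr : 0 ≤ r) :
      HasDerivWithinAt (fun r => Real.exp (α * r) • w r) 0 (Ici 0) r := by
    have hexp : HasDerivWithinAt (fun r => Real.exp (α * r)) (Real.exp (α * r) * α) (Ici 0) r :=
      (((hasDerivAt_id r).const_mul α).exp.hasDerivWithinAt).congr_deriv (by simp)
    exact (hexp.smul (hw r hr)).congr_deriv (by module)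
  have hconst : Real.exp (α * t) • w t = Real.exp (α * 0) • w 0 :=
    constant_of_has_deriv_right_zero
      (fun r hr => (hderiv r hr.1).continuousWithinAt.mono Icc_subset_Ici_self)
      (fun r hr => (hderiv r hr.1).mono (Ici_subset_Ici.2 hr.1)) t (right_mem_Icc.2 ht)
  rw [mul_zero, Real.exp_zero, one_smul] at hconst
  rw [← hconst, smul_smul, ← Real.exp_add, neg_add_cancel, Real.exp_zero, one_smul]

lemma norm_le_of_hasDerivWithinAt_neg_smul {w : ℝ → E} {α : ℝ} (hα : 0 ≤ α)
    (hw : ∀ t, 0 ≤ t → HasDerivWithinAt w (-(α • w t)) (Ici 0) t) {t : ℝ} (ht : 0 ≤ t) :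
    ‖w t‖ ≤ ‖w 0‖ := by
  rw [eq_exp_smul_of_hasDerivWithinAt_neg_smul hw ht, norm_smul, Real.norm_of_nonneg
    (Real.exp_pos _).le]
  exact mul_le_of_le_one_left (norm_nonneg _)
    (Real.exp_le_one_iff.2 (neg_nonpos.2 (mul_nonneg hα ht)))

lemma norm_map_add_map_sub_smul_le {A : E →L[ℝ] G} {B : F →L[ℝ] G} {u : E} {v : F}
    {w : G} {a b cu cv cw α : ℝ} (hA : ‖A‖ ≤ a) (hB : ‖B‖ ≤ b) (hu : ‖u‖ ≤ cu)
    (hv : ‖v‖ ≤ cv) (hw : ‖w‖ ≤ cw) (hα : 0 ≤ α) :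
    ‖A u + B v - α • w‖ ≤ a * cu + b * cv + α * cw := by
  have hαw : ‖α • w‖ ≤ α * cw := by
    rw [norm_smul, Real.norm_of_nonneg hα]
    gcongr
  exact norm_sub_le_of_le
    (norm_add_le_of_le (A.le_of_opNorm_le_of_le hA hu) (B.le_of_opNorm_le_of_le hB hv)) hαw

end Trajectory

section Multiplier

variable {X Y : Type*} [NormedAddCommGroup X] [InnerProductSpace ℝ X] [CompleteSpace X]
  [NormedAddCommGroup Y] [InnerProductSpace ℝ Y]

lemma mul_norm_le_norm_of_mul_norm_sq_le_inner {c : ℝ} {v w : Y} (h : c * ‖v‖ ^ 2 ≤ ⟪w, v⟫) :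
    c * ‖v‖ ≤ ‖w‖ := by
  rcases (norm_nonneg v).eq_or_lt with hv | hv
  · simp only [← hv, mul_zero, norm_nonneg]
  · refine le_of_mul_le_mul_right ?_ hv
    calc c * ‖v‖ * ‖v‖ = c * ‖v‖ ^ 2 := by ring
      _ ≤ ⟪w, v⟫ := h
      _ ≤ ‖w‖ * ‖v‖ := real_inner_le_norm w v

variable [CompleteSpace Y]

lemma inner_comp_adjoint_add_comp_self_apply (A : X →L[ℝ] Y) {B : Y →L[ℝ] Y}
    (hB : (B : Y →ₗ[ℝ] Y).IsSymmetric) (l : Y) :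
    ⟪(A ∘L ContinuousLinearMap.adjoint A + B ∘L B) l, l⟫ =
      ‖ContinuousLinearMap.adjoint A l‖ ^ 2 + ‖B l‖ ^ 2 := by
  have hBB : ⟪B (B l), l⟫ = ⟪B l, B l⟫ := hB (B l) l
  rw [add_apply, ContinuousLinearMap.comp_apply, ContinuousLinearMap.comp_apply, inner_add_left,
    ← ContinuousLinearMap.adjoint_inner_right, hBB, real_inner_self_eq_norm_sq,
    real_inner_self_eq_norm_sq]

lemma sq_mul_norm_le_norm_comp_adjoint_add_comp_self_apply (A : X →L[ℝ] Y) {B : Y →L[ℝ] Y}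
    (hB : (B : Y →ₗ[ℝ] Y).IsSymmetric) {μ : ℝ} (hμ : 0 ≤ μ) {l : Y}
    (hcoer : μ * ‖l‖ ^ 2 ≤ ⟪B l, l⟫) :
    μ ^ 2 * ‖l‖ ≤ ‖(A ∘L ContinuousLinearMap.adjoint A + B ∘L B) l‖ := by
  refine mul_norm_le_norm_of_mul_norm_sq_le_inner ?_
  calc μ ^ 2 * ‖l‖ ^ 2 = (μ * ‖l‖) ^ 2 := by ring
    _ ≤ ‖B l‖ ^ 2 := by gcongr; exact mul_norm_le_norm_of_mul_norm_sq_le_inner hcoer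
    _ ≤ ‖ContinuousLinearMap.adjoint A l‖ ^ 2 + ‖B l‖ ^ 2 := le_add_of_nonneg_left (sq_nonneg _)
    _ = ⟪(A ∘L ContinuousLinearMap.adjoint A + B ∘L B) l, l⟫ :=
      (inner_comp_adjoint_add_comp_self_apply A hB l).symm

-- The left-hand side is the time derivative of `∇_y g` along the flow.
lemma map_velocity_eq_neg_smul_of_multiplier_s6 {A : X →L[ℝ] Y} {B : Y →L[ℝ] Y} {l v w : Y} {u : X}
    {α : ℝ}
    (hl : (A ∘L ContinuousLinearMap.adjoint A + B ∘L B) l = -(A u + B v - α • w)) :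
    A (-u - ContinuousLinearMap.adjoint A l) + B (-v - B l) = -(α • w) := by
  rw [add_apply, ContinuousLinearMap.comp_apply, ContinuousLinearMap.comp_apply] at hl
  calc A (-u - ContinuousLinearMap.adjoint A l) + B (-v - B l)
      = -(A u + B v) - (A (ContinuousLinearMap.adjoint A l) + B (B l)) := by
        simp only [map_sub, map_neg]; abel
    _ = -(α • w) := by rw [hl]; abel

-- `u` and `v` stand for `∇ₓf` and `∇_y f` along the trajectory, `A` and `B` for `∇²_{yx}g` and
-- `∇²_{yy}g`.
theorem stmt_6_general (g : X → Y → ℝ) (hg : ContDiff ℝ 2 (Function.uncurry g))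
    {μ : ℝ} (hμ : 0 < μ) (hsc : ∀ x, StrongConvexOn univ μ (g x))
    {x u : ℝ → X} {y v lam : ℝ → Y} {A : ℝ → X →L[ℝ] Y} {B : ℝ → Y →L[ℝ] Y}
    (hA : ∀ t, 0 ≤ t → HasFDerivAt (fun x' => gradient (g x') (y t)) (A t) (x t))
    (hB : ∀ t, 0 ≤ t → HasFDerivAt (gradient (g (x t))) (B t) (y t))
    {a b cu cv : ℝ} (hAa : ∀ t, 0 ≤ t → ‖A t‖ ≤ a) (hBb : ∀ t, 0 ≤ t → ‖B t‖ ≤ b)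
    (hu : ∀ t, 0 ≤ t → ‖u t‖ ≤ cu) (hv : ∀ t, 0 ≤ t → ‖v t‖ ≤ cv)
    {α : ℝ} (hα : 0 ≤ α)
    (hlam : ∀ t, 0 ≤ t → (A t ∘L ContinuousLinearMap.adjoint (A t) + B t ∘L B t) (lam t) =
      -(A t (u t) + B t (v t) - α • gradient (g (x t)) (y t)))
    (hx : ∀ t, 0 ≤ t →
      HasDerivWithinAt x (-u t - ContinuousLinearMap.adjoint (A t) (lam t)) (Ici 0) t)
    (hy : ∀ t, 0 ≤ t → HasDerivWithinAt y (-v t - B t (lam t)) (Ici 0) t) :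
    ∀ t, 0 ≤ t →
      ‖lam t‖ ≤ (1 / μ ^ 2) * (a * cu + b * cv + α * ‖gradient (g (x 0)) (y 0)‖) := by
  intro t ht
  have hgrad : Differentiable ℝ (Function.uncurry fun x y => gradient (g x) y) :=
    (contDiff_uncurry_gradient hg one_add_one_eq_two.le).differentiable one_ne_zero
  have hslice : Differentiable ℝ (g (x t)) :=
    (hg.comp (contDiff_prodMk_right (x t))).differentiable two_ne_zero
  have hdecay : ‖gradient (g (x t)) (y t)‖ ≤ ‖gradient (g (x 0)) (y 0)‖ :=
    norm_le_of_hasDerivWithinAt_neg_smul hα (w := fun s => gradient (g (x s)) (y s))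
      (fun s hs => map_velocity_eq_neg_smul_of_multiplier_s6 (hlam s hs) ▸
        hasDerivWithinAt_comp_of_partial (hgrad _) (hA s hs) (hB s hs) (hx s hs) (hy s hs)) ht
  have hcoercive : μ * ‖lam t‖ ^ 2 ≤ ⟪B t (lam t), lam t⟫ :=
    mul_norm_sq_le_inner_hessian hslice (hsc (x t)) (hB t ht) (lam t)
  rw [one_div, ← div_eq_inv_mul, le_div_iff₀' (pow_pos hμ 2)]
  calc μ ^ 2 * ‖lam t‖
      ≤ ‖(A t ∘L ContinuousLinearMap.adjoint (A t) + B t ∘L B t) (lam t)‖ :=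
        sq_mul_norm_le_norm_comp_adjoint_add_comp_self_apply (A t)
          (isSymmetric_hessian hslice (hB t ht)) hμ.le hcoercive
    _ = ‖A t (u t) + B t (v t) - α • gradient (g (x t)) (y t)‖ := by rw [hlam t ht, norm_neg]
    _ ≤ a * cu + b * cv + α * ‖gradient (g (x 0)) (y 0)‖ :=
        norm_map_add_map_sub_smul_le (hAa t ht) (hBb t ht) (hu t ht) (hv t ht) hdecay hα

end Multiplier

/-- along the safe gradient flow (SGF), the dual multiplier is uniformly bounded:
`‖λ(x(t), y(t))‖ ≤ (1/μ_g²)(C_{yx}^g C_x^f + C_{yy}^g C_y^f + α ‖∇_y g(x(0), y(0))‖)`. -/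
theorem stmt_6 {n m : ℕ} (f g : Vec n → Vec m → ℝ)
    -- Assumption A1
    (hf : ContDiff ℝ 1 (Function.uncurry f))
    (Cxf Cyf : ℝ) (hCxf : 0 < Cxf) (hCyf : 0 < Cyf)
    (hfxB : ∀ x y, ‖gradx f x y‖ ≤ Cxf)
    (hfyB : ∀ x y, ‖grady f x y‖ ≤ Cyf)
    (Lxf Lyf : ℝ≥0)
    (hfxL : LipschitzWith Lxf fun p : Vec n × Vec m => gradx f p.1 p.2)
    (hfyL : LipschitzWith Lyf fun p : Vec n × Vec m => grady f p.1 p.2)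
    -- Assumption A2
    (hg : ContDiff ℝ 2 (Function.uncurry g))
    (μg : ℝ) (hμg : 0 < μg)
    (hsc : ∀ x, StrongConvexOn Set.univ μg (g x))
    (Lyyg Lyxg : ℝ≥0)
    (hgyLy : ∀ x, LipschitzWith Lyyg fun y => grady g x y)
    (hgyLx : ∀ y, LipschitzWith Lyxg fun x => grady g x y)
    (Gyx : Vec n → Vec m → Vec n →L[ℝ] Vec m)
    (Gyy : Vec n → Vec m → Vec m →L[ℝ] Vec m)
    (hGyx : ∀ x y, HasFDerivAt (fun x' => grady g x' y) (Gyx x y) x)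
    (hGyy : ∀ x y, HasFDerivAt (fun y' => grady g x y') (Gyy x y) y)
    (Cyxg Cyyg : ℝ≥0)
    (hGyxL : LipschitzWith Cyxg fun p : Vec n × Vec m => Gyx p.1 p.2)
    (hGyyL : LipschitzWith Cyyg fun p : Vec n × Vec m => Gyy p.1 p.2)
    -- (as noted in the paper, `C_{yx}^g` and `C_{yy}^g` also bound the operator norms
    -- of the Hessian blocks)
    (hGyxB : ∀ x y, ‖Gyx x y‖ ≤ (Cyxg : ℝ))
    (hGyyB : ∀ x y, ‖Gyy x y‖ ≤ (Cyyg : ℝ))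
    -- the safe gradient flow (SGF) for a parameter `α > 0`, on the time interval `t ≥ 0`:
    -- `lam t` is the dual multiplier `λ(x(t), y(t))`, characterized as the solution of
    -- `(∇²_{yx}g (∇²_{yx}g)ᵀ + (∇²_{yy}g)²) λ = −(∇²_{yx}g ∇ₓf + ∇²_{yy}g ∇_y f − α ∇_y g)`
    (α : ℝ) (hα : 0 < α)
    (x : ℝ → Vec n) (y : ℝ → Vec m) (lam : ℝ → Vec m)
    (hlam : ∀ t, 0 ≤ t →
      (Gyx (x t) (y t) ∘L ContinuousLinearMap.adjoint (Gyx (x t) (y t))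
        + Gyy (x t) (y t) ∘L Gyy (x t) (y t)) (lam t)
      = -(Gyx (x t) (y t) (gradx f (x t) (y t)) + Gyy (x t) (y t) (grady f (x t) (y t))
          - α • grady g (x t) (y t)))
    (hx : ∀ t, 0 ≤ t → HasDerivAt x
      (-gradx f (x t) (y t) - ContinuousLinearMap.adjoint (Gyx (x t) (y t)) (lam t)) t)
    (hy : ∀ t, 0 ≤ t → HasDerivAt y
      (-grady f (x t) (y t) - Gyy (x t) (y t) (lam t)) t)
    :
    ∀ t, 0 ≤ t →
      ‖lam t‖ ≤ (1 / μg ^ 2) *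
        ((Cyxg : ℝ) * Cxf + (Cyyg : ℝ) * Cyf + α * ‖grady g (x 0) (y 0)‖) := by
  exact stmt_6_general g hg hμg hsc (fun t _ => hGyx (x t) (y t)) (fun t _ => hGyy (x t) (y t))
    (fun t _ => hGyxB (x t) (y t)) (fun t _ => hGyyB (x t) (y t)) (fun t _ => hfxB (x t) (y t))
    (fun t _ => hfyB (x t) (y t)) hα.le hlam (fun t ht => (hx t ht).hasDerivWithinAt)
    (fun t ht => (hy t ht).hasDerivWithinAt)

end
end

section
/- Let α > 0 and let t ↦ (x(t), y(t)), t ≥ 0, be a continuously differentiable solution of the safe gradient flow (SGF), under Assumptions A1 and A2. Set c := μ_g² / (μ_g² + (L_{yx}^g)²), β := (1/μ_g²)(C_{yx}^g C_x^f + C_{yy}^g C_y^f + α‖∇_y g(x(0),y(0))‖), and define the Lyapunov function E(t) := f(x(t),y(t)) − f* + β ‖∇_y g(x(t),y(t))‖ + c ∫₀ᵗ ‖F(x(τ),y(τ))‖² dτ, where f* is the global optimal value of the single-level problem min f(x,y) subject to ∇_y g(x,y) = 0. Then E(t) ≤ E(0) for all t ≥ 0, and moreover (1/t) ∫₀ᵗ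 ‖∇ℓ(x(τ))‖² dτ ≤ 2E(0)/(c t) + ((1 − e^{−2αt})/(α t)) (M₁²/μ_g²) ‖∇_y g(x(0), y(0))‖² for all t > 0. -/
open Set MeasureTheory
open scoped NNReal RealInnerProductSpace

noncomputable section

/-!
Write `h t = ∇_y g (x t, y t)`. The multiplier `λ` is chosen so that `h' = -α h` along the flow, so
`h` decays exactly like `exp (-α t)`, and with it the lower-level error `‖y - y*(x)‖ ≤ ‖h‖ / μ`. The
objective satisfies `(f(x, y))' = -(‖x'‖² + ‖y'‖²) + α ⟪λ, h⟫`: since `‖λ‖ ≤ β` and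
`‖h‖' = -α ‖h‖`, the penalty `β ‖h‖` absorbs the last term, while `‖x'‖² + ‖y'‖² ≥ c ‖F‖²` by the
Cauchy–Schwarz inequality. Thus the Lyapunov function decreases, `∫ ‖F‖²` stays bounded, and `∇ℓ`
differs from `F` by an exponentially decaying term.
-/

open Function InnerProductSpace
open scoped Gradient InnerProduct

section CoerciveOperators

variable {E F : Type*} [NormedAddCommGroup E] [InnerProductSpace ℝ E]
  [NormedAddCommGroup F] [InnerProductSpace ℝ F] {μ : ℝ}

lemma mul_norm_le_norm_of_mul_sq_norm_le_inner {a w : F} (h : μ * ‖w‖ ^ 2 ≤ ⟪a, w⟫) :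
    μ * ‖w‖ ≤ ‖a‖ := by
  rcases (norm_nonneg w).eq_or_lt with hw | hw
  · simp [← hw]
  · refine le_of_mul_le_mul_right ?_ hw
    calc μ * ‖w‖ * ‖w‖ = μ * ‖w‖ ^ 2 := by ring
      _ ≤ ‖a‖ * ‖w‖ := h.trans (real_inner_le_norm a w)

lemma continuous_of_apply_eq_of_mul_norm_le {P V W : Type*} [TopologicalSpace P]
    [NormedAddCommGroup V] [NormedSpace ℝ V] [NormedAddCommGroup W] [NormedSpace ℝ W]
    {T : P → V →L[ℝ] W} {b : P → W} {v : P → V} (hμ : 0 < μ) (hT : Continuous T)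
    (hb : Continuous b) (hbound : ∀ p w, μ * ‖w‖ ≤ ‖T p w‖) (hv : ∀ p, T p (v p) = b p) :
    Continuous v := by
  refine continuous_iff_continuousAt.2 fun p₀ => tendsto_iff_norm_sub_tendsto_zero.2 ?_
  have hcont : Continuous fun p => ‖b p - T p (v p₀)‖ / μ := by fun_prop
  have hlim := hcont.tendsto p₀
  simp only [hv, sub_self, norm_zero, zero_div] at hlim
  refine squeeze_zero (fun _ => norm_nonneg _) (fun p => (le_div_iff₀' hμ).2 ?_) hlim
  simpa only [map_sub, hv] using hbound p (v p - v p₀)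

variable [CompleteSpace E] [CompleteSpace F] {A : E →L[ℝ] F} {B : F →L[ℝ] F}

lemma sq_mul_norm_le_norm_apply_add_sq (A : E →L[ℝ] F) (hμ : 0 ≤ μ)
    (hsymm : (B : F →ₗ[ℝ] F).IsSymmetric) (hB : ∀ w, μ * ‖w‖ ^ 2 ≤ ⟪B w, w⟫) (l : F) :
    μ ^ 2 * ‖l‖ ≤ ‖(A ∘L A† + B ∘L B) l‖ := by
  refine mul_norm_le_norm_of_mul_sq_norm_le_inner ?_
  have hBl : μ * ‖l‖ ≤ ‖B l‖ := mul_norm_le_norm_of_mul_sq_norm_le_inner (hB l)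
  have hBB : ⟪B (B l), l⟫ = ‖B l‖ ^ 2 := by
    rw [← real_inner_self_eq_norm_sq]; exact hsymm (B l) l
  have hAA : ⟪A ((A†) l), l⟫ = ‖(A†) l‖ ^ 2 := by
    rw [← real_inner_self_eq_norm_sq, ContinuousLinearMap.adjoint_inner_right]
  calc μ ^ 2 * ‖l‖ ^ 2 = (μ * ‖l‖) ^ 2 := by ring
    _ ≤ ‖B l‖ ^ 2 := by gcongr
    _ ≤ ‖(A†) l‖ ^ 2 + ‖B l‖ ^ 2 := le_add_of_nonneg_left (sq_nonneg _)
    _ = ⟪(A ∘L A† + B ∘L B) l, l⟫ := by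
      simp only [add_apply, ContinuousLinearMap.comp_apply, inner_add_left, hAA, hBB]

lemma mul_sq_norm_sub_adjoint_le {L : ℝ} (hμ : 0 < μ) (hB : ∀ w, μ * ‖w‖ ≤ ‖B w‖) (hA : ‖A‖ ≤ L)
    (p : E) (v l : F) :
    μ ^ 2 / (μ ^ 2 + L ^ 2) * ‖p - (A†) v‖ ^ 2 ≤ ‖-p - (A†) l‖ ^ 2 + ‖-B v - B l‖ ^ 2 := by
  set X := -p - (A†) l with hX
  set Y := -B v - B l with hY
  have hvl : μ * ‖v + l‖ ≤ ‖Y‖ := by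
    rw [hY, ← neg_add', ← map_add, norm_neg]
    exact hB (v + l)
  have hAvl : ‖(A†) (v + l)‖ ≤ L * ‖v + l‖ :=
    (A†).le_of_opNorm_le ((LinearIsometryEquiv.norm_map _ A).trans_le hA) _
  have hsplit : p - (A†) v = -X - (A†) (v + l) := by rw [hX, map_add]; abel
  have hlin : μ * ‖p - (A†) v‖ ≤ μ * ‖X‖ + L * ‖Y‖ := by
    have hL : 0 ≤ L := (norm_nonneg A).trans hA
    calc μ * ‖p - (A†) v‖ ≤ μ * (‖X‖ + L * ‖v + l‖) := by
          rw [hsplit, ← norm_neg X]; gcongr; exact (norm_sub_le _ _).trans (by gcongr)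
      _ = μ * ‖X‖ + L * (μ * ‖v + l‖) := by ring
      _ ≤ μ * ‖X‖ + L * ‖Y‖ := by gcongr
  rw [div_mul_eq_mul_div, div_le_iff₀ (by positivity)]
  calc μ ^ 2 * ‖p - (A†) v‖ ^ 2 = (μ * ‖p - (A†) v‖) ^ 2 := by ring
    _ ≤ (μ * ‖X‖ + L * ‖Y‖) ^ 2 := by gcongr
    _ ≤ (‖X‖ ^ 2 + ‖Y‖ ^ 2) * (μ ^ 2 + L ^ 2) := by
      linarith [sq_nonneg (μ * ‖Y‖ - L * ‖X‖)]

lemma apply_add_apply_eq_neg_smul_of_multiplier_eq {α : ℝ} {p : E} {q h l : F}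
    (hl : (A ∘L A† + B ∘L B) l = -(A p + B q - α • h)) :
    A (-p - (A†) l) + B (-q - B l) = -α • h := by
  simp only [add_apply, ContinuousLinearMap.comp_apply] at hl
  rw [neg_smul, map_sub, map_sub, map_neg, map_neg, sub_add_sub_comm, hl]
  abel

lemma inner_add_inner_eq_of_multiplier_eq {α : ℝ} (hsymm : (B : F →ₗ[ℝ] F).IsSymmetric)
    {p : E} {q h l : F} (hl : (A ∘L A† + B ∘L B) l = -(A p + B q - α • h)) :
    ⟪p, -p - (A†) l⟫ + ⟪q, -q - B l⟫ =
      -(‖-p - (A†) l‖ ^ 2 + ‖-q - B l‖ ^ 2) + α * ⟪l, h⟫ := by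
  have hvel := apply_add_apply_eq_neg_smul_of_multiplier_eq hl
  set X := -p - (A†) l with hX
  set Y := -q - B l with hY
  have hp : p = -X - (A†) l := by rw [hX]; abel
  have hq : q = -Y - B l := by rw [hY]; abel
  have hBY : ⟪B l, Y⟫ = ⟪l, B Y⟫ := hsymm l Y
  have hlh : ⟪l, A X⟫ + ⟪l, B Y⟫ = -(α * ⟪l, h⟫) := by
    rw [← inner_add_right, hvel, real_inner_smul_right, neg_mul]
  rw [hp, hq, inner_sub_left, inner_sub_left, inner_neg_left, inner_neg_left,
    real_inner_self_eq_norm_sq, real_inner_self_eq_norm_sq,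
    ContinuousLinearMap.adjoint_inner_left, hBY]
  linarith

end CoerciveOperators

section StrongConvexity

lemma fderiv_apply_sub_le_of_convexOn {V : Type*} [NormedAddCommGroup V] [NormedSpace ℝ V]
    {s : Set V} {φ : V → ℝ} {φ' : V →L[ℝ] ℝ} {a b : V} (hφ : ConvexOn ℝ s φ) (ha : a ∈ s)
    (hb : b ∈ s) (hφ' : HasFDerivAt φ φ' a) : φ' (b - a) ≤ φ b - φ a := by
  have hline : HasDerivAt (φ ∘ AffineMap.lineMap a b) (φ' (b - a)) (0 : ℝ) :=
    HasFDerivAt.comp_hasDerivAt (0 : ℝ) (by simpa using hφ') AffineMap.hasDerivAt_lineMap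
  simpa [slope_def_field] using
    (hφ.comp_affineMap (AffineMap.lineMap a b : ℝ →ᵃ[ℝ] V)).le_slope_of_hasDerivAt
      (x := 0) (y := 1) (by simpa) (by simpa) one_pos hline

variable {F : Type*} [NormedAddCommGroup F] [InnerProductSpace ℝ F]

/- First-order condition for the convex function `ψ - μ / 2 * ‖·‖ ^ 2`. -/
lemma mul_sq_norm_sub_le_inner_of_strongConvexOn [CompleteSpace F] {s : Set F} {μ : ℝ} {ψ : F → ℝ}
    {a b p q : F} (hψ : StrongConvexOn s μ ψ) (ha : a ∈ s) (hb : b ∈ s)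
    (hp : HasGradientAt ψ p a) (hq : HasGradientAt ψ q b) :
    μ * ‖b - a‖ ^ 2 ≤ ⟪q - p, b - a⟫ := by
  have hconv := strongConvexOn_iff_convex.1 hψ
  have hderiv {z r : F} (h : HasGradientAt ψ r z) :=
    h.hasFDerivAt.sub ((hasStrictFDerivAt_norm_sq z).hasFDerivAt.const_mul (μ / 2))
  have hab := fderiv_apply_sub_le_of_convexOn hconv ha hb (hderiv hp)
  have hba := fderiv_apply_sub_le_of_convexOn hconv hb ha (hderiv hq)
  rw [← neg_sub b a, map_neg] at hba
  simp only [sub_apply, smul_apply, toDual_apply_apply,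
    innerSL_apply_apply, nsmul_eq_mul, smul_eq_mul] at hab hba
  have hsq : ⟪b, b - a⟫ - ⟪a, b - a⟫ = ‖b - a‖ ^ 2 := by
    rw [← inner_sub_left, real_inner_self_eq_norm_sq]
  rw [inner_sub_left, ← hsq]
  push_cast at hab hba
  linarith

lemma mul_norm_sub_le_norm_gradient_of_strongConvexOn [CompleteSpace F] {μ : ℝ} {ψ : F → ℝ}
    (hψ : StrongConvexOn univ μ ψ) (hdiff : Differentiable ℝ ψ) {b₀ : F} (hb₀ : ∇ ψ b₀ = 0)
    (b : F) : μ * ‖b - b₀‖ ≤ ‖∇ ψ b‖ := by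
  have hmono := mul_sq_norm_sub_le_inner_of_strongConvexOn hψ (mem_univ b₀) (mem_univ b)
    (hdiff b₀).hasGradientAt (hdiff b).hasGradientAt
  rw [hb₀, sub_zero] at hmono
  exact mul_norm_le_norm_of_mul_sq_norm_le_inner hmono

lemma gradient_eq_zero_of_isMinOn [CompleteSpace F] {ψ : F → ℝ} {b : F} (h : IsMinOn ψ univ b) :
    ∇ ψ b = 0 := by
  rw [gradient, (h.isLocalMin Filter.univ_mem).fderiv_eq_zero, map_zero]

lemma mul_sq_norm_le_inner_of_hasFDerivAt {μ : ℝ} {h : F → F} {B : F →L[ℝ] F} {z : F}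
    (hmono : ∀ z', μ * ‖z' - z‖ ^ 2 ≤ ⟪h z' - h z, z' - z⟫) (hB : HasFDerivAt h B z) (w : F) :
    μ * ‖w‖ ^ 2 ≤ ⟪B w, w⟫ := by
  have hlim := ((hB.hasLineDerivAt w).tendsto_slope_zero).inner (𝕜 := ℝ)
    (tendsto_const_nhds (x := w))
  refine ge_of_tendsto hlim ?_
  filter_upwards [self_mem_nhdsWithin] with t (ht : t ≠ 0)
  have hbase := hmono (z + t • w)
  rw [add_sub_cancel_left, norm_smul, mul_pow, Real.norm_eq_abs, sq_abs,
    real_inner_smul_right] at hbase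
  rw [real_inner_smul_left]
  calc μ * ‖w‖ ^ 2 = (t ^ 2)⁻¹ * (μ * (t ^ 2 * ‖w‖ ^ 2)) := by field_simp
    _ ≤ (t ^ 2)⁻¹ * (t * ⟪h (z + t • w) - h z, w⟫) := by gcongr
    _ = t⁻¹ * ⟪h (z + t • w) - h z, w⟫ := by field_simp

lemma isSymmetric_of_hasGradientAt_of_hasFDerivAt [CompleteSpace F] {ψ : F → ℝ} {h : F → F}
    {B : F →L[ℝ] F} {z : F} (hψ : ∀ z', HasGradientAt ψ (h z') z') (hB : HasFDerivAt h B z) :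
    (B : F →ₗ[ℝ] F).IsSymmetric := by
  intro u w
  have hB' : HasFDerivAt (fun z' => toDual ℝ F (h z')) ((innerSL ℝ : F →L[ℝ] F →L[ℝ] ℝ) ∘L B) z :=
    (innerSL ℝ : F →L[ℝ] F →L[ℝ] ℝ).hasFDerivAt.comp z hB
  exact (second_derivative_symmetric (fun z' => (hψ z').hasFDerivAt) hB' u w).trans
    (real_inner_comm _ _)

end StrongConvexity

section PartialDerivatives

lemma fderiv_uncurry_eq_coprod {𝕜 U V W : Type*} [NontriviallyNormedField 𝕜]
    [NormedAddCommGroup U] [NormedSpace 𝕜 U] [NormedAddCommGroup V] [NormedSpace 𝕜 V]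
    [NormedAddCommGroup W] [NormedSpace 𝕜 W] {h : U → V → W} {A : U →L[𝕜] W} {B : V →L[𝕜] W}
    {a : U} {b : V} (hh : DifferentiableAt 𝕜 (uncurry h) (a, b))
    (hA : HasFDerivAt (fun a' => h a' b) A a) (hB : HasFDerivAt (h a) B b) :
    fderiv 𝕜 (uncurry h) (a, b) = A.coprod B := by
  have hA' := hA.unique
    (hh.hasFDerivAt.comp (f := fun a' => (a', b)) a (hasFDerivAt_prodMk_left a b))
  have hB' := hB.unique (hh.hasFDerivAt.comp b (hasFDerivAt_prodMk_right a b))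
  rw [hA', hB', ← ContinuousLinearMap.comp_coprod, ContinuousLinearMap.coprod_inl_inr,
    ContinuousLinearMap.comp_id]

lemma differentiable_right_of_uncurry {𝕜 U V W : Type*} [NontriviallyNormedField 𝕜]
    [NormedAddCommGroup U] [NormedSpace 𝕜 U] [NormedAddCommGroup V] [NormedSpace 𝕜 V]
    [NormedAddCommGroup W] [NormedSpace 𝕜 W] {h : U → V → W} (hh : Differentiable 𝕜 (uncurry h))
    (a : U) : Differentiable 𝕜 (h a) :=
  hh.comp ((differentiable_const a).prodMk differentiable_id)

lemma hasDerivAt_comp_of_partial {V W G : Type*} [NormedAddCommGroup V] [NormedSpace ℝ V]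
    [NormedAddCommGroup W] [NormedSpace ℝ W] [NormedAddCommGroup G] [NormedSpace ℝ G]
    {h : V → W → G} {A : V →L[ℝ] G} {B : W →L[ℝ] G} {x : ℝ → V} {y : ℝ → W} {x' : V} {y' : W}
    {t : ℝ} (hh : DifferentiableAt ℝ (uncurry h) (x t, y t))
    (hA : HasFDerivAt (fun a => h a (y t)) A (x t)) (hB : HasFDerivAt (h (x t)) B (y t))
    (hx : HasDerivAt x x' t) (hy : HasDerivAt y y' t) :
    HasDerivAt (fun s => h (x s) (y s)) (A x' + B y') t := by
  have hcomp := hh.hasFDerivAt.comp_hasDerivAt t (hx.prodMk hy)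
  rwa [fderiv_uncurry_eq_coprod hh hA hB] at hcomp

variable {V F : Type*} [NormedAddCommGroup V] [NormedSpace ℝ V]
  [NormedAddCommGroup F] [InnerProductSpace ℝ F] [CompleteSpace F]

lemma hasGradientAt_right_of_differentiable {φ : V → F → ℝ} (hφ : Differentiable ℝ (uncurry φ))
    (a : V) (b : F) : HasGradientAt (φ a) (∇ (φ a) b) b :=
  (differentiable_right_of_uncurry hφ a b).hasGradientAt

lemma hasGradientAt_left_of_differentiable {φ : F → V → ℝ} (hφ : Differentiable ℝ (uncurry φ))
    (a : F) (b : V) : HasGradientAt (fun a' => φ a' b) (∇ (fun a' => φ a' b) a) a :=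
  (hφ.comp (differentiable_id.prodMk (differentiable_const b)) a).hasGradientAt

lemma contDiff_gradient_right {φ : V → F → ℝ} {k l : WithTop ℕ∞} (hφ : ContDiff ℝ l (uncurry φ))
    (hkl : k + 1 ≤ l) : ContDiff ℝ k fun p : V × F => ∇ (φ p.1) p.2 :=
  (toDual ℝ F).symm.toContinuousLinearEquiv.contDiff.comp
    (ContDiff.fderiv (f := fun p : V × F => φ p.1)
      (hφ.comp (by fun_prop : ContDiff ℝ l fun q : (V × F) × F => (q.1.1, q.2))) contDiff_snd hkl)

lemma contDiff_gradient_left {φ : F → V → ℝ} {k l : WithTop ℕ∞} (hφ : ContDiff ℝ l (uncurry φ))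
    (hkl : k + 1 ≤ l) : ContDiff ℝ k fun p : F × V => ∇ (fun a => φ a p.2) p.1 :=
  (contDiff_gradient_right (φ := fun b a => φ a b)
    (hφ.comp (contDiff_snd.prodMk contDiff_fst)) hkl).comp (contDiff_snd.prodMk contDiff_fst)

end PartialDerivatives

section ExponentialDecay

lemma eq_exp_smul_of_hasDerivAt {V : Type*} [NormedAddCommGroup V] [NormedSpace ℝ V] {h : ℝ → V}
    {k t : ℝ} (hh : ∀ s, 0 ≤ s → HasDerivAt h (k • h s) s) (ht : 0 ≤ t) :
    h t = Real.exp (k * t) • h 0 := by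
  have hderiv : ∀ s, 0 ≤ s → HasDerivAt (fun s => Real.exp (-k * s) • h s) 0 s := fun s hs => by
    have hprod := ((hasDerivAt_id s).const_mul (-k)).exp.smul (hh s hs)
    refine hprod.congr_deriv ?_
    simp [smul_smul]
  have hconst : Real.exp (-k * t) • h t = Real.exp (-k * 0) • h 0 :=
    constant_of_has_deriv_right_zero (a := 0) (b := t)
      (fun s hs => (hderiv s hs.1).continuousAt.continuousWithinAt)
      (fun s hs => (hderiv s hs.1).hasDerivWithinAt) t ⟨ht, le_rfl⟩
  rw [mul_zero, Real.exp_zero, one_smul] at hconst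
  rw [← hconst, smul_smul, ← Real.exp_add, neg_mul, add_neg_cancel, Real.exp_zero, one_smul]

lemma integral_exp_mul {k : ℝ} (hk : k ≠ 0) (a b : ℝ) :
    ∫ τ in a..b, Real.exp (k * τ) = (Real.exp (k * b) - Real.exp (k * a)) / k := by
  rw [intervalIntegral.integral_comp_mul_left _ hk, integral_exp, smul_eq_mul, inv_mul_eq_div]

lemma integral_sq_norm_le_of_norm_sub_le_exp {V : Type*} [NormedAddCommGroup V] {u w : ℝ → V}
    {K α t : ℝ} (hα : α ≠ 0) (ht : 0 ≤ t) (hw : ContinuousOn w (Icc 0 t))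
    (huw : ∀ s ∈ Icc 0 t, ‖u s - w s‖ ≤ K * Real.exp (-α * s)) :
    ∫ τ in (0 : ℝ)..t, ‖u τ‖ ^ 2 ≤
      2 * (∫ τ in (0 : ℝ)..t, ‖w τ‖ ^ 2) + K ^ 2 * ((1 - Real.exp (-2 * α * t)) / α) := by
  have hpointwise : ∀ s ∈ Icc 0 t,
      ‖u s‖ ^ 2 ≤ 2 * ‖w s‖ ^ 2 + 2 * K ^ 2 * Real.exp (-2 * α * s) := fun s hs => by
    have hexp : Real.exp (-2 * α * s) = Real.exp (-α * s) ^ 2 := by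
      rw [← Real.exp_nat_mul]; push_cast; ring_nf
    calc ‖u s‖ ^ 2 ≤ (‖w s‖ + K * Real.exp (-α * s)) ^ 2 := by
          gcongr
          exact (norm_le_norm_add_norm_sub' _ _).trans (by gcongr; exact huw s hs)
      _ ≤ 2 * (‖w s‖ ^ 2 + (K * Real.exp (-α * s)) ^ 2) := add_sq_le
      _ = 2 * ‖w s‖ ^ 2 + 2 * K ^ 2 * Real.exp (-2 * α * s) := by rw [hexp]; ring
  have hw_int : IntervalIntegrable (fun τ => 2 * ‖w τ‖ ^ 2) volume 0 t :=
    ((hw.norm.pow 2).const_mul 2).intervalIntegrable_of_Icc ht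
  have hexp_int : IntervalIntegrable (fun τ => 2 * K ^ 2 * Real.exp (-2 * α * τ)) volume 0 t :=
    Continuous.intervalIntegrable (by fun_prop) _ _
  have hmono : ∫ τ in (0 : ℝ)..t, ‖u τ‖ ^ 2 ≤
      ∫ τ in (0 : ℝ)..t, (2 * ‖w τ‖ ^ 2 + 2 * K ^ 2 * Real.exp (-2 * α * τ)) := by
    rw [intervalIntegral.integral_of_le ht, intervalIntegral.integral_of_le ht]
    refine integral_mono_of_nonneg (.of_forall fun _ => sq_nonneg _) (hw_int.add hexp_int).1 ?_
    filter_upwards [ae_restrict_mem measurableSet_Ioc] with s hs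
    exact hpointwise s (Ioc_subset_Icc_self hs)
  rw [intervalIntegral.integral_add hw_int hexp_int, intervalIntegral.integral_const_mul,
    intervalIntegral.integral_const_mul,
    integral_exp_mul (mul_ne_zero (by norm_num) hα), mul_zero, Real.exp_zero] at hmono
  refine hmono.trans_eq ?_
  field_simp
  ring

end ExponentialDecay

section HessianBlocks

variable {E F : Type*} [NormedAddCommGroup E] [NormedSpace ℝ E] [NormedAddCommGroup F]
  [InnerProductSpace ℝ F] [CompleteSpace F]

/-- `A` and `B` are the Hessian blocks `∇²_{yx} g` and `∇²_{yy} g`, that is, the partial derivatives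
of the lower-level gradient `∇_y g`. -/
structure HasHessianBlocks (g : E → F → ℝ) (A : E → F → E →L[ℝ] F) (B : E → F → F →L[ℝ] F) :
    Prop where
  hasFDerivAt_left : ∀ a b, HasFDerivAt (fun a' => ∇ (g a') b) (A a b) a
  hasFDerivAt_right : ∀ a b, HasFDerivAt (∇ (g a)) (B a b) b

variable {g : E → F → ℝ} {A : E → F → E →L[ℝ] F} {B : E → F → F →L[ℝ] F} {μ : ℝ}

namespace HasHessianBlocks

lemma isSymmetric (hAB : HasHessianBlocks g A B) (hg : Differentiable ℝ (uncurry g)) (a : E)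
    (b : F) : (B a b : F →ₗ[ℝ] F).IsSymmetric :=
  isSymmetric_of_hasGradientAt_of_hasFDerivAt (hasGradientAt_right_of_differentiable hg a)
    (hAB.hasFDerivAt_right a b)

lemma mul_sq_norm_le_inner (hAB : HasHessianBlocks g A B) (hg : Differentiable ℝ (uncurry g))
    (hconv : ∀ a, StrongConvexOn univ μ (g a)) (a : E) (b w : F) :
    μ * ‖w‖ ^ 2 ≤ ⟪B a b w, w⟫ :=
  mul_sq_norm_le_inner_of_hasFDerivAt
    (fun b' => mul_sq_norm_sub_le_inner_of_strongConvexOn (hconv a) (mem_univ b) (mem_univ b')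
      (hasGradientAt_right_of_differentiable hg a b)
      (hasGradientAt_right_of_differentiable hg a b'))
    (hAB.hasFDerivAt_right a b) w

lemma mul_norm_le_norm_apply (hAB : HasHessianBlocks g A B) (hg : Differentiable ℝ (uncurry g))
    (hconv : ∀ a, StrongConvexOn univ μ (g a)) (a : E) (b w : F) : μ * ‖w‖ ≤ ‖B a b w‖ :=
  mul_norm_le_norm_of_mul_sq_norm_le_inner (hAB.mul_sq_norm_le_inner hg hconv a b w)

lemma fderiv_gradient (hAB : HasHessianBlocks g A B) (hg : ContDiff ℝ 2 (uncurry g)) (p : E × F) :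
    fderiv ℝ (fun q : E × F => ∇ (g q.1) q.2) p = (A p.1 p.2).coprod (B p.1 p.2) :=
  fderiv_uncurry_eq_coprod (h := fun a b => ∇ (g a) b)
    ((contDiff_gradient_right (k := 1) hg one_add_one_eq_two.le).differentiable one_ne_zero p)
    (hAB.hasFDerivAt_left p.1 p.2) (hAB.hasFDerivAt_right p.1 p.2)

lemma continuous_left (hAB : HasHessianBlocks g A B) (hg : ContDiff ℝ 2 (uncurry g)) :
    Continuous (uncurry A) := by
  have hcomp := ((contDiff_gradient_right (k := 1) hg one_add_one_eq_two.le).continuous_fderiv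
    one_ne_zero).clm_comp_const (ContinuousLinearMap.inl ℝ E F)
  simp only [hAB.fderiv_gradient hg, ContinuousLinearMap.coprod_comp_inl] at hcomp
  exact hcomp

lemma continuous_right (hAB : HasHessianBlocks g A B) (hg : ContDiff ℝ 2 (uncurry g)) :
    Continuous (uncurry B) := by
  have hcomp := ((contDiff_gradient_right (k := 1) hg one_add_one_eq_two.le).continuous_fderiv
    one_ne_zero).clm_comp_const (ContinuousLinearMap.inr ℝ E F)
  simp only [hAB.fderiv_gradient hg, ContinuousLinearMap.coprod_comp_inr] at hcomp
  exact hcomp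

end HasHessianBlocks

lemma le_add_mul_norm_gradient {f : E → F → ℝ} (hf : Differentiable ℝ (uncurry f))
    (hg : Differentiable ℝ (uncurry g)) (hAB : HasHessianBlocks g A B) (hμ : 0 < μ)
    (hconv : ∀ a, StrongConvexOn univ μ (g a)) {Cf CB : ℝ} (hfC : ∀ a b, ‖∇ (f a) b‖ ≤ Cf)
    (hBC : ∀ a b, ‖B a b‖ ≤ CB) {β : ℝ} (hβ : 1 / μ ^ 2 * (CB * Cf) ≤ β)
    {a : E} {b₀ : F} (hb₀ : ∇ (g a) b₀ = 0) (b : F) :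
    f a b₀ ≤ f a b + β * ‖∇ (g a) b‖ := by
  have hlip : f a b₀ - f a b ≤ Cf * ‖b - b₀‖ := by
    rw [norm_sub_rev]
    refine (le_abs_self _).trans (convex_univ.norm_image_sub_le_of_norm_hasFDerivWithin_le
      (fun z _ => (hasGradientAt_right_of_differentiable hf a z).hasFDerivAt.hasFDerivWithinAt)
      (fun z _ => ?_) (mem_univ b) (mem_univ b₀))
    exact (LinearIsometryEquiv.norm_map _ _).trans_le (hfC a z)
  have hdist : ‖b - b₀‖ ≤ 1 / μ ^ 2 * (CB * ‖∇ (g a) b‖) := by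
    rw [one_div_mul_eq_div, le_div_iff₀' (by positivity)]
    calc μ ^ 2 * ‖b - b₀‖ = μ * (μ * ‖b - b₀‖) := by ring
      _ ≤ μ * ‖∇ (g a) b‖ := by
        gcongr
        exact mul_norm_sub_le_norm_gradient_of_strongConvexOn (hconv a)
          (differentiable_right_of_uncurry hg a) hb₀ b
      _ ≤ ‖B a b (∇ (g a) b)‖ := hAB.mul_norm_le_norm_apply hg hconv a b _
      _ ≤ CB * ‖∇ (g a) b‖ := (B a b).le_of_opNorm_le (hBC a b) _
  have hCf : 0 ≤ Cf := (norm_nonneg _).trans (hfC a b)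
  calc f a b₀ ≤ f a b + Cf * ‖b - b₀‖ := by linarith
    _ ≤ f a b + Cf * (1 / μ ^ 2 * (CB * ‖∇ (g a) b‖)) := by gcongr
    _ = f a b + 1 / μ ^ 2 * (CB * Cf) * ‖∇ (g a) b‖ := by ring
    _ ≤ f a b + β * ‖∇ (g a) b‖ := by gcongr

end HessianBlocks

section SafeGradientFlow

variable {E F : Type*} [NormedAddCommGroup E] [InnerProductSpace ℝ E] [CompleteSpace E]
  [NormedAddCommGroup F] [InnerProductSpace ℝ F] [CompleteSpace F]

/-- The surrogate `F(x, y) = ∇ₓ f(x, y) - A(x, y)† v(x, y)` of the gradient of the implicit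
objective, where `A` stands for `∇²_{yx} g`. -/
def surrogateGradient (f : E → F → ℝ) (A : E → F → E →L[ℝ] F) (v : E → F → F) (a : E) (b : F) : E :=
  ∇ (fun a' => f a' b) a - ((A a b)†) (v a b)

/-- `(x, y)` solves the safe gradient flow for `t ≥ 0`, where `A` and `B` stand for `∇²_{yx} g` and
`∇²_{yy} g`. The multiplier is a function `lam` of time, given implicitly by its linear system. -/
structure IsSafeGradientFlow (f g : E → F → ℝ) (A : E → F → E →L[ℝ] F) (B : E → F → F →L[ℝ] F)
    (α : ℝ) (x : ℝ → E) (y lam : ℝ → F) : Prop where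
  multiplier_eq : ∀ t, 0 ≤ t →
    (A (x t) (y t) ∘L (A (x t) (y t))† + B (x t) (y t) ∘L B (x t) (y t)) (lam t) =
      -(A (x t) (y t) (∇ (fun a => f a (y t)) (x t)) + B (x t) (y t) (∇ (f (x t)) (y t))
        - α • ∇ (g (x t)) (y t))
  hasDerivAt_left : ∀ t, 0 ≤ t →
    HasDerivAt x (-∇ (fun a => f a (y t)) (x t) - ((A (x t) (y t))†) (lam t)) t
  hasDerivAt_right : ∀ t, 0 ≤ t →
    HasDerivAt y (-∇ (f (x t)) (y t) - B (x t) (y t) (lam t)) t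

variable {f g : E → F → ℝ} {A : E → F → E →L[ℝ] F} {B : E → F → F →L[ℝ] F} {v : E → F → F}
  {μ : ℝ}

lemma continuous_surrogateGradient (hf : ContDiff ℝ 1 (uncurry f)) (hg : ContDiff ℝ 2 (uncurry g))
    (hAB : HasHessianBlocks g A B) (hμ : 0 < μ)
    (hconv : ∀ a, StrongConvexOn univ μ (g a)) (hv : ∀ a b, B a b (v a b) = ∇ (f a) b) :
    Continuous (uncurry (surrogateGradient f A v)) := by
  have hvcont : Continuous (uncurry v) :=
    continuous_of_apply_eq_of_mul_norm_le hμ (hAB.continuous_right hg)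
      (contDiff_gradient_right (k := 0) hf (zero_add 1).le).continuous
      (fun p => hAB.mul_norm_le_norm_apply (hg.differentiable two_ne_zero) hconv p.1 p.2)
      fun p => hv p.1 p.2
  exact (contDiff_gradient_left (k := 0) hf (zero_add 1).le).continuous.sub
    ((ContinuousLinearMap.adjoint.continuous.comp (hAB.continuous_left hg)).clm_apply hvcont)

namespace IsSafeGradientFlow

variable {α t : ℝ} {x : ℝ → E} {y lam : ℝ → F}

lemma hasDerivAt_gradient (h : IsSafeGradientFlow f g A B α x y lam)
    (hg : ContDiff ℝ 2 (uncurry g)) (hAB : HasHessianBlocks g A B) (ht : 0 ≤ t) :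
    HasDerivAt (fun s => ∇ (g (x s)) (y s)) (-α • ∇ (g (x t)) (y t)) t := by
  rw [← apply_add_apply_eq_neg_smul_of_multiplier_eq (h.multiplier_eq t ht)]
  exact hasDerivAt_comp_of_partial (h := fun a b => ∇ (g a) b)
    ((contDiff_gradient_right (k := 1) hg one_add_one_eq_two.le).differentiable one_ne_zero _)
    (hAB.hasFDerivAt_left _ _) (hAB.hasFDerivAt_right _ _)
    (h.hasDerivAt_left t ht) (h.hasDerivAt_right t ht)

lemma norm_gradient_eq (h : IsSafeGradientFlow f g A B α x y lam)
    (hg : ContDiff ℝ 2 (uncurry g)) (hAB : HasHessianBlocks g A B) (ht : 0 ≤ t) :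
    ‖∇ (g (x t)) (y t)‖ = Real.exp (-α * t) * ‖∇ (g (x 0)) (y 0)‖ := by
  rw [eq_exp_smul_of_hasDerivAt (fun s hs => h.hasDerivAt_gradient hg hAB hs) ht, norm_smul,
    Real.norm_eq_abs, Real.abs_exp]

lemma norm_gradient_le (h : IsSafeGradientFlow f g A B α x y lam)
    (hg : ContDiff ℝ 2 (uncurry g)) (hAB : HasHessianBlocks g A B) (hα : 0 ≤ α) (ht : 0 ≤ t) :
    ‖∇ (g (x t)) (y t)‖ ≤ ‖∇ (g (x 0)) (y 0)‖ := by
  rw [h.norm_gradient_eq hg hAB ht]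
  refine mul_le_of_le_one_left (norm_nonneg _) (Real.exp_le_one_iff.2 ?_)
  rw [neg_mul]
  exact neg_nonpos.2 (mul_nonneg hα ht)

lemma norm_multiplier_le (h : IsSafeGradientFlow f g A B α x y lam)
    (hg : ContDiff ℝ 2 (uncurry g)) (hAB : HasHessianBlocks g A B) (hμ : 0 < μ)
    (hconv : ∀ a, StrongConvexOn univ μ (g a)) {C₁ C₂ CA CB : ℝ}
    (hf₁ : ∀ a b, ‖∇ (fun a' => f a' b) a‖ ≤ C₁) (hf₂ : ∀ a b, ‖∇ (f a) b‖ ≤ C₂)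
    (hA : ∀ a b, ‖A a b‖ ≤ CA) (hB : ∀ a b, ‖B a b‖ ≤ CB) (hα : 0 ≤ α) (ht : 0 ≤ t) :
    ‖lam t‖ ≤ 1 / μ ^ 2 * (CA * C₁ + CB * C₂ + α * ‖∇ (g (x 0)) (y 0)‖) := by
  have hg' : Differentiable ℝ (uncurry g) := hg.differentiable two_ne_zero
  rw [one_div_mul_eq_div, le_div_iff₀' (by positivity)]
  refine (sq_mul_norm_le_norm_apply_add_sq (A (x t) (y t)) hμ.le
    (hAB.isSymmetric hg' (x t) (y t)) (hAB.mul_sq_norm_le_inner hg' hconv _ _) (lam t)).trans ?_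
  rw [h.multiplier_eq t ht, norm_neg]
  refine (norm_sub_le _ _).trans (add_le_add ((norm_add_le _ _).trans (add_le_add ?_ ?_)) ?_)
  · exact (A (x t) (y t)).le_of_opNorm_le_of_le (hA _ _) (hf₁ _ _)
  · exact (B (x t) (y t)).le_of_opNorm_le_of_le (hB _ _) (hf₂ _ _)
  · rw [norm_smul, Real.norm_of_nonneg hα]
    exact mul_le_mul_of_nonneg_left (h.norm_gradient_le hg hAB hα ht) hα

lemma hasDerivAt_objective (h : IsSafeGradientFlow f g A B α x y lam)
    (hf : Differentiable ℝ (uncurry f)) (hg : Differentiable ℝ (uncurry g))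
    (hAB : HasHessianBlocks g A B) (ht : 0 ≤ t) :
    HasDerivAt (fun s => f (x s) (y s))
      (-(‖deriv x t‖ ^ 2 + ‖deriv y t‖ ^ 2) + α * ⟪lam t, ∇ (g (x t)) (y t)⟫) t := by
  rw [(h.hasDerivAt_left t ht).deriv, (h.hasDerivAt_right t ht).deriv,
    ← inner_add_inner_eq_of_multiplier_eq (hAB.isSymmetric hg _ _) (h.multiplier_eq t ht)]
  exact hasDerivAt_comp_of_partial (hf _)
    (hasGradientAt_left_of_differentiable hf (x t) (y t)).hasFDerivAt
    (hasGradientAt_right_of_differentiable hf (x t) (y t)).hasFDerivAt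
    (h.hasDerivAt_left t ht) (h.hasDerivAt_right t ht)

lemma mul_sq_norm_surrogateGradient_le (h : IsSafeGradientFlow f g A B α x y lam)
    (hg : Differentiable ℝ (uncurry g)) (hAB : HasHessianBlocks g A B) (hμ : 0 < μ)
    (hconv : ∀ a, StrongConvexOn univ μ (g a)) {L : ℝ} (hA : ∀ a b, ‖A a b‖ ≤ L)
    (hv : ∀ a b, B a b (v a b) = ∇ (f a) b) (ht : 0 ≤ t) :
    μ ^ 2 / (μ ^ 2 + L ^ 2) * ‖surrogateGradient f A v (x t) (y t)‖ ^ 2 ≤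
      ‖deriv x t‖ ^ 2 + ‖deriv y t‖ ^ 2 := by
  rw [(h.hasDerivAt_left t ht).deriv, (h.hasDerivAt_right t ht).deriv, ← hv]
  exact mul_sq_norm_sub_adjoint_le hμ (hAB.mul_norm_le_norm_apply hg hconv _ _) (hA _ _) _ _ _

lemma continuousOn_surrogateGradient (h : IsSafeGradientFlow f g A B α x y lam)
    (hF : Continuous (uncurry (surrogateGradient f A v))) :
    ContinuousOn (fun s => surrogateGradient f A v (x s) (y s)) (Icc 0 t) :=
  hF.comp_continuousOn (ContinuousOn.prodMk
    (fun s hs => (h.hasDerivAt_left s hs.1).continuousAt.continuousWithinAt)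
    fun s hs => (h.hasDerivAt_right s hs.1).continuousAt.continuousWithinAt)

/- `‖∇_y g‖` enters through its closed form, which is differentiable even where `∇_y g = 0`. -/
lemma hasDerivAt_penalizedObjective (h : IsSafeGradientFlow f g A B α x y lam)
    (hf : Differentiable ℝ (uncurry f)) (hg : Differentiable ℝ (uncurry g))
    (hAB : HasHessianBlocks g A B) (β N : ℝ) (ht : 0 ≤ t) :
    HasDerivAt (fun s => f (x s) (y s) + β * (Real.exp (-α * s) * N))
      (-(‖deriv x t‖ ^ 2 + ‖deriv y t‖ ^ 2)
        + α * (⟪lam t, ∇ (g (x t)) (y t)⟫ - β * (Real.exp (-α * t) * N))) t := by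
  have hexp := ((hasDerivAt_id t).const_mul (-α)).exp.mul_const N
  refine ((h.hasDerivAt_objective hf hg hAB ht).add (hexp.const_mul β)).congr_deriv ?_
  simp only [id]
  ring

theorem lyapunov_le (h : IsSafeGradientFlow f g A B α x y lam) (hf : ContDiff ℝ 1 (uncurry f))
    (hg : ContDiff ℝ 2 (uncurry g)) (hAB : HasHessianBlocks g A B) (hμ : 0 < μ)
    (hconv : ∀ a, StrongConvexOn univ μ (g a)) {L : ℝ} (hA : ∀ a b, ‖A a b‖ ≤ L)
    (hv : ∀ a b, B a b (v a b) = ∇ (f a) b) (hα : 0 ≤ α) {β : ℝ} (hβ : ∀ s, 0 ≤ s → ‖lam s‖ ≤ β)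
    (ht : 0 ≤ t) :
    f (x t) (y t) + β * ‖∇ (g (x t)) (y t)‖ + μ ^ 2 / (μ ^ 2 + L ^ 2) *
        ∫ τ in (0 : ℝ)..t, ‖surrogateGradient f A v (x τ) (y τ)‖ ^ 2 ≤
      f (x 0) (y 0) + β * ‖∇ (g (x 0)) (y 0)‖ := by
  have hg' : Differentiable ℝ (uncurry g) := hg.differentiable two_ne_zero
  have hderiv s (hs : 0 ≤ s) := (h.hasDerivAt_penalizedObjective (hf.differentiable one_ne_zero)
    hg' hAB β ‖∇ (g (x 0)) (y 0)‖ hs).neg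
  have hF := h.continuousOn_surrogateGradient (t := t)
    (continuous_surrogateGradient hf hg hAB hμ hconv hv)
  have hint := intervalIntegral.integral_le_sub_of_hasDeriv_right_of_le (a := 0) (b := t)
    (φ := fun s => μ ^ 2 / (μ ^ 2 + L ^ 2) * ‖surrogateGradient f A v (x s) (y s)‖ ^ 2) ht
    (fun s hs => (hderiv s hs.1).continuousAt.continuousWithinAt)
    (fun s hs => (hderiv s hs.1.le).hasDerivWithinAt)
    ((hF.norm.pow 2).const_mul _).integrableOn_Icc fun s hs => by
      have hinner : ⟪lam s, ∇ (g (x s)) (y s)⟫ ≤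
          β * (Real.exp (-α * s) * ‖∇ (g (x 0)) (y 0)‖) := by
        rw [← h.norm_gradient_eq hg hAB hs.1.le]
        exact (real_inner_le_norm _ _).trans (by gcongr; exact hβ s hs.1.le)
      linarith [h.mul_sq_norm_surrogateGradient_le hg' hAB hμ hconv hA hv hs.1.le,
        mul_nonneg hα (sub_nonneg.2 hinner)]
  simp only [intervalIntegral.integral_const_mul, Pi.neg_apply, mul_zero, Real.exp_zero,
    one_mul] at hint
  rw [h.norm_gradient_eq hg hAB ht]
  linarith

theorem integral_sq_norm_le (h : IsSafeGradientFlow f g A B α x y lam)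
    (hf : ContDiff ℝ 1 (uncurry f)) (hg : ContDiff ℝ 2 (uncurry g)) (hAB : HasHessianBlocks g A B)
    (hμ : 0 < μ) (hconv : ∀ a, StrongConvexOn univ μ (g a))
    (hv : ∀ a b, B a b (v a b) = ∇ (f a) b) {ystar : E → F}
    (hystar : ∀ a, ∇ (g a) (ystar a) = 0) {G : E → E} {M : ℝ} (hM : 0 ≤ M)
    (hG : ∀ a b, ‖G a - surrogateGradient f A v a b‖ ≤ M * ‖b - ystar a‖) (hα : α ≠ 0)
    (ht : 0 ≤ t) :
    ∫ τ in (0 : ℝ)..t, ‖G (x τ)‖ ^ 2 ≤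
      2 * (∫ τ in (0 : ℝ)..t, ‖surrogateGradient f A v (x τ) (y τ)‖ ^ 2)
        + (M * (‖∇ (g (x 0)) (y 0)‖ / μ)) ^ 2 * ((1 - Real.exp (-2 * α * t)) / α) := by
  refine integral_sq_norm_le_of_norm_sub_le_exp hα ht
    (h.continuousOn_surrogateGradient (continuous_surrogateGradient hf hg hAB hμ hconv hv))
    fun s hs => (hG (x s) (y s)).trans ?_
  have hdist : ‖y s - ystar (x s)‖ ≤ Real.exp (-α * s) * ‖∇ (g (x 0)) (y 0)‖ / μ := by
    rw [le_div_iff₀' hμ, ← h.norm_gradient_eq hg hAB hs.1]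
    exact mul_norm_sub_le_norm_gradient_of_strongConvexOn (hconv _)
      (differentiable_right_of_uncurry (hg.differentiable two_ne_zero) _) (hystar _) _
  calc M * ‖y s - ystar (x s)‖
      ≤ M * (Real.exp (-α * s) * ‖∇ (g (x 0)) (y 0)‖ / μ) := by gcongr
    _ = M * (‖∇ (g (x 0)) (y 0)‖ / μ) * Real.exp (-α * s) := by ring

end IsSafeGradientFlow

theorem stmt_7_general (hf : ContDiff ℝ 1 (uncurry f)) {C₁ C₂ : ℝ}
    (hf₁ : ∀ a b, ‖∇ (fun a' => f a' b) a‖ ≤ C₁) (hf₂ : ∀ a b, ‖∇ (f a) b‖ ≤ C₂)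
    (hg : ContDiff ℝ 2 (uncurry g)) (hμ : 0 < μ) (hconv : ∀ a, StrongConvexOn univ μ (g a))
    {L : ℝ≥0} (hgL : ∀ b, LipschitzWith L fun a => ∇ (g a) b) (hAB : HasHessianBlocks g A B)
    {CA CB : ℝ} (hA : ∀ a b, ‖A a b‖ ≤ CA) (hB : ∀ a b, ‖B a b‖ ≤ CB)
    {ystar : E → F} (hystar : ∀ a, IsMinOn (g a) univ (ystar a))
    (hv : ∀ a b, B a b (v a b) = ∇ (f a) b) {M : ℝ} (hM : 0 ≤ M)
    (hMF : ∀ a b, ‖∇ (fun a' => f a' (ystar a')) a - surrogateGradient f A v a b‖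
      ≤ M * ‖b - ystar a‖)
    {α : ℝ} (hα : 0 < α) {x : ℝ → E} {y lam : ℝ → F} (hflow : IsSafeGradientFlow f g A B α x y lam)
    {fstar : ℝ} (hfstar : IsGLB {r | ∃ a b, ∇ (g a) b = 0 ∧ f a b = r} fstar) {c β : ℝ}
    (hc : c = μ ^ 2 / (μ ^ 2 + (L : ℝ) ^ 2))
    (hβ : β = 1 / μ ^ 2 * (CA * C₁ + CB * C₂ + α * ‖∇ (g (x 0)) (y 0)‖)) {Lyap : ℝ → ℝ}
    (hLyap : ∀ t, Lyap t = f (x t) (y t) - fstar + β * ‖∇ (g (x t)) (y t)‖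
      + c * ∫ τ in (0 : ℝ)..t, ‖surrogateGradient f A v (x τ) (y τ)‖ ^ 2) :
    (∀ t, 0 ≤ t → Lyap t ≤ Lyap 0) ∧
    (∀ t, 0 < t → 1 / t * ∫ τ in (0 : ℝ)..t, ‖∇ (fun a => f a (ystar a)) (x τ)‖ ^ 2 ≤
      2 * Lyap 0 / (c * t) + (1 - Real.exp (-2 * α * t)) / (α * t) * (M ^ 2 / μ ^ 2)
        * ‖∇ (g (x 0)) (y 0)‖ ^ 2) := by
  have hcrit a : ∇ (g a) (ystar a) = 0 := gradient_eq_zero_of_isMinOn (hystar a)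
  have hAL a b : ‖A a b‖ ≤ L := (hAB.hasFDerivAt_left a b).le_of_lipschitz (hgL b)
  have hlam s (hs : 0 ≤ s) : ‖lam s‖ ≤ β :=
    hβ ▸ hflow.norm_multiplier_le hg hAB hμ hconv hf₁ hf₂ hA hB hα.le hs
  have hdecrease : ∀ t, 0 ≤ t → Lyap t ≤ Lyap 0 := fun t ht => by
    have hle := hflow.lyapunov_le hf hg hAB hμ hconv hAL hv hα.le hlam ht
    rw [← hc] at hle
    rw [hLyap, hLyap 0, intervalIntegral.integral_same]
    linarith
  refine ⟨hdecrease, fun t ht => ?_⟩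
  have hpenalized : fstar ≤ f (x t) (y t) + β * ‖∇ (g (x t)) (y t)‖ := by
    refine (hfstar.1 ⟨x t, ystar (x t), hcrit _, rfl⟩).trans
      (le_add_mul_norm_gradient (hf.differentiable one_ne_zero) (hg.differentiable two_ne_zero)
        hAB hμ hconv hf₂ hB ?_ (hcrit _) (y t))
    have hAC : 0 ≤ CA * C₁ := mul_nonneg ((norm_nonneg _).trans (hA (x 0) (y 0)))
      ((norm_nonneg _).trans (hf₁ (x 0) (y 0)))
    rw [hβ]
    gcongr
    linarith [mul_nonneg hα.le (norm_nonneg (∇ (g (x 0)) (y 0)))]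
  have hc₀ : 0 < c := hc ▸ by positivity
  have hF : ∫ τ in (0 : ℝ)..t, ‖surrogateGradient f A v (x τ) (y τ)‖ ^ 2 ≤ Lyap 0 / c := by
    rw [le_div_iff₀' hc₀]
    linarith [hdecrease t ht.le, hLyap t]
  have hG := hflow.integral_sq_norm_le hf hg hAB hμ hconv hv hcrit hM hMF hα.ne' ht.le
  calc _ ≤ 1 / t * (2 * (Lyap 0 / c) + (M * (‖∇ (g (x 0)) (y 0)‖ / μ)) ^ 2 *
        ((1 - Real.exp (-2 * α * t)) / α)) := by
        gcongr
        linarith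
    _ = _ := by field_simp

end SafeGradientFlow

/-- Lyapunov decrease and ergodic convergence rate for the safe gradient flow (SGF):
with `c = μ_g²/(μ_g² + (L_{yx}^g)²)`,
`β = (1/μ_g²)(C_{yx}^g C_x^f + C_{yy}^g C_y^f + α‖∇_y g(x(0),y(0))‖)` and
`E(t) = f(x(t),y(t)) − f* + β‖∇_y g(x(t),y(t))‖ + c ∫₀ᵗ ‖F(x(τ),y(τ))‖² dτ`,
one has `E(t) ≤ E(0)` for all `t ≥ 0` and the stated ergodic bound on `‖∇ℓ‖²`. -/
theorem stmt_7 {n m : ℕ} (f g : Vec n → Vec m → ℝ)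
    -- Assumption A1
    (hf : ContDiff ℝ 1 (Function.uncurry f))
    (Cxf Cyf : ℝ) (hCxf : 0 < Cxf) (hCyf : 0 < Cyf)
    (hfxB : ∀ x y, ‖gradx f x y‖ ≤ Cxf)
    (hfyB : ∀ x y, ‖grady f x y‖ ≤ Cyf)
    (Lxf Lyf : ℝ≥0)
    (hfxL : LipschitzWith Lxf fun p : Vec n × Vec m => gradx f p.1 p.2)
    (hfyL : LipschitzWith Lyf fun p : Vec n × Vec m => grady f p.1 p.2)
    -- Assumption A2
    (hg : ContDiff ℝ 2 (Function.uncurry g))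
    (μg : ℝ) (hμg : 0 < μg)
    (hsc : ∀ x, StrongConvexOn Set.univ μg (g x))
    (Lyyg Lyxg : ℝ≥0)
    (hgyLy : ∀ x, LipschitzWith Lyyg fun y => grady g x y)
    (hgyLx : ∀ y, LipschitzWith Lyxg fun x => grady g x y)
    (Gyx : Vec n → Vec m → Vec n →L[ℝ] Vec m)
    (Gyy : Vec n → Vec m → Vec m →L[ℝ] Vec m)
    (hGyx : ∀ x y, HasFDerivAt (fun x' => grady g x' y) (Gyx x y) x)
    (hGyy : ∀ x y, HasFDerivAt (fun y' => grady g x y') (Gyy x y) y)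
    (Cyxg Cyyg : ℝ≥0)
    (hGyxL : LipschitzWith Cyxg fun p : Vec n × Vec m => Gyx p.1 p.2)
    (hGyyL : LipschitzWith Cyyg fun p : Vec n × Vec m => Gyy p.1 p.2)
    (hGyxB : ∀ x y, ‖Gyx x y‖ ≤ (Cyxg : ℝ))
    (hGyyB : ∀ x y, ‖Gyy x y‖ ≤ (Cyyg : ℝ))
    -- lower-level solution map, surrogate direction `v`, and the constant `M₁`
    (ystar : Vec n → Vec m)
    (hystar : ∀ x', IsMinOn (g x') Set.univ (ystar x'))
    (v : Vec n → Vec m → Vec m)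
    (hv : ∀ x' y', Gyy x' y' (v x' y') = grady f x' y')
    (M₁ : ℝ) (hM₁ : 0 < M₁)
    (hM₁P : ∀ x' y',
      ‖gradient (fun x'' => f x'' (ystar x'')) x' - Fsur f Gyx v x' y'‖ ≤ M₁ * ‖y' - ystar x'‖)
    -- the safe gradient flow (SGF) for a parameter `α > 0`, on the time interval `t ≥ 0`:
    -- `lam t` is the dual multiplier `λ(x(t), y(t))`, characterized as the solution of
    -- `(∇²_{yx}g (∇²_{yx}g)ᵀ + (∇²_{yy}g)²) λ = −(∇²_{yx}g ∇ₓf + ∇²_{yy}g ∇_y f − α ∇_y g)`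
    (α : ℝ) (hα : 0 < α)
    (x : ℝ → Vec n) (y : ℝ → Vec m) (lam : ℝ → Vec m)
    (hlam : ∀ t, 0 ≤ t →
      (Gyx (x t) (y t) ∘L ContinuousLinearMap.adjoint (Gyx (x t) (y t))
        + Gyy (x t) (y t) ∘L Gyy (x t) (y t)) (lam t)
      = -(Gyx (x t) (y t) (gradx f (x t) (y t)) + Gyy (x t) (y t) (grady f (x t) (y t))
          - α • grady g (x t) (y t)))
    (hx : ∀ t, 0 ≤ t → HasDerivAt x
      (-gradx f (x t) (y t) - ContinuousLinearMap.adjoint (Gyx (x t) (y t)) (lam t)) t)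
    (hy : ∀ t, 0 ≤ t → HasDerivAt y
      (-grady f (x t) (y t) - Gyy (x t) (y t) (lam t)) t)
    -- `f*` is the global optimal value of `min f(x,y)` s.t. `∇_y g(x,y) = 0`
    (fstar : ℝ)
    (hfstar : IsGLB {r : ℝ | ∃ x' y', grady g x' y' = 0 ∧ f x' y' = r} fstar)
    -- the constants `c`, `β` and the Lyapunov function `E`
    (c β : ℝ)
    (hc : c = μg ^ 2 / (μg ^ 2 + (Lyxg : ℝ) ^ 2))
    (hβ : β = (1 / μg ^ 2) * ((Cyxg : ℝ) * Cxf + (Cyyg : ℝ) * Cyf + α * ‖grady g (x 0) (y 0)‖))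
    (EE : ℝ → ℝ)
    (hEE : ∀ t, EE t = f (x t) (y t) - fstar + β * ‖grady g (x t) (y t)‖
      + c * ∫ τ in (0:ℝ)..t, ‖Fsur f Gyx v (x τ) (y τ)‖ ^ 2) :
    (∀ t, 0 ≤ t → EE t ≤ EE 0) ∧
    (∀ t, 0 < t →
      (1 / t) * ∫ τ in (0:ℝ)..t, ‖gradient (fun x' => f x' (ystar x')) (x τ)‖ ^ 2
        ≤ 2 * EE 0 / (c * t)
          + ((1 - Real.exp (-2 * α * t)) / (α * t)) * (M₁ ^ 2 / μg ^ 2)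
            * ‖grady g (x 0) (y 0)‖ ^ 2) :=
  stmt_7_general hf hfxB hfyB hg hμg hsc hgyLx ⟨hGyx, hGyy⟩ hGyxB hGyyB hystar hv hM₁.le hM₁P hα
    ⟨hlam, hx, hy⟩ hfstar hc hβ hEE

end
end

section
/- Suppose Assumption A2 holds. For every x ∈ ℝⁿ, y ∈ ℝᵐ, and every vector d ∈ ℝᵐ, defining A(x,y,d) := ∇_x f(x,y) − ∇²_{yx} g(x,y)ᵀ d and B(x,y,d) := ∇_y f(x,y) − ∇²_{yy} g(x,y) d, one has ‖F(x,y)‖ ≤ ‖A(x,y,d)‖ + (L_{yx}^g / μ_g) ‖B(x,y,d)‖. -/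
open Set MeasureTheory
open scoped NNReal RealInnerProductSpace

noncomputable section

/-!
Since `∇²_{yy} g(x,y) v = ∇_y f(x,y)`, the residual `B` is `∇²_{yy} g(x,y) (v - d)`, while `F` and
`A` differ by `∇²_{yx} g(x,y)ᵀ (v - d)`. Strong convexity makes the Hessian expand norms by at
least `μ_g`, so `‖v - d‖ ≤ ‖B‖ / μ_g`, and the Lipschitz bound gives `‖∇²_{yx} g(x,y)‖ ≤ L_{yx}^g`.
The Hessian bound is obtained from the gradient inequality for strongly convex functions: added to
its mirror image it gives strong monotonicity of the derivative, which passes to the limit.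
-/

open Filter Topology

section NormedSpace

variable {E F G : Type*} [NormedAddCommGroup E] [NormedSpace ℝ E]
  [NormedAddCommGroup F] [NormedSpace ℝ F] [NormedAddCommGroup G] [NormedSpace ℝ G]
  {s : Set E} {f : E → ℝ} {x y : E}

lemma lineDeriv_add_modulus_le_sub_of_uniformConvexOn {φ : ℝ → ℝ} {f' : ℝ}
    (hf : UniformConvexOn s φ f) (hx : x ∈ s) (hy : y ∈ s)
    (hf' : HasLineDerivAt ℝ f f' x (y - x)) : f' + φ ‖y - x‖ ≤ f y - f x := by
  have slope_le : ∀ᶠ t : ℝ in 𝓝[>] 0,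
      t⁻¹ • (f (x + t • (y - x)) - f x) ≤ f y - f x - (1 - t) * φ ‖y - x‖ := by
    filter_upwards [Ioc_mem_nhdsGT one_pos] with t ⟨ht₀, ht₁⟩
    have hconv := hf.2 hy hx ht₀.le (sub_nonneg.2 ht₁) (add_sub_cancel t 1)
    rw [show t • y + (1 - t) • x = x + t • (y - x) by module] at hconv
    rw [smul_eq_mul, inv_mul_le_iff₀ ht₀]
    simp only [smul_eq_mul] at hconv
    linarith
  have bound_tendsto : Tendsto (fun t : ℝ ↦ f y - f x - (1 - t) * φ ‖y - x‖) (𝓝[>] 0)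
      (𝓝 (f y - f x - (1 - 0) * φ ‖y - x‖)) :=
    (Continuous.tendsto (by fun_prop) 0).mono_left nhdsWithin_le_nhds
  have := le_of_tendsto_of_tendsto hf'.tendsto_slope_zero_right bound_tendsto slope_le
  linarith

lemma mul_norm_sq_le_fderiv_sub_of_strongConvexOn {m : ℝ} {f'x f'y : E →L[ℝ] ℝ}
    (hf : StrongConvexOn s m f) (hx : x ∈ s) (hy : y ∈ s)
    (hf'x : HasFDerivAt f f'x x) (hf'y : HasFDerivAt f f'y y) :
    m * ‖y - x‖ ^ 2 ≤ (f'y - f'x) (y - x) := by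
  have at_x := lineDeriv_add_modulus_le_sub_of_uniformConvexOn hf hx hy (hf'x.hasLineDerivAt _)
  have at_y := lineDeriv_add_modulus_le_sub_of_uniformConvexOn hf hy hx (hf'y.hasLineDerivAt _)
  rw [norm_sub_rev x y, ← neg_sub y x, map_neg] at at_y
  rw [sub_apply]
  linarith

lemma mul_norm_sq_le_fderiv_of_eventually_mul_norm_sq_le {m : ℝ} {T : E → E →L[ℝ] ℝ}
    {T' : E →L[ℝ] E →L[ℝ] ℝ} (hT : ∀ᶠ z in 𝓝 x, m * ‖z - x‖ ^ 2 ≤ (T z - T x) (z - x))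
    (hT' : HasFDerivAt T T' x) (u : E) : m * ‖u‖ ^ 2 ≤ T' u u := by
  have slope_tendsto : Tendsto (fun t : ℝ ↦ (t⁻¹ • (T (x + t • u) - T x)) u) (𝓝[>] 0)
      (𝓝 (T' u u)) :=
    ((ContinuousLinearMap.apply ℝ ℝ u).continuous.tendsto _).comp
      (hT'.hasLineDerivAt u).tendsto_slope_zero_right
  have line_tendsto : Tendsto (fun t : ℝ ↦ x + t • u) (𝓝[>] 0) (𝓝 x) :=
    (Continuous.tendsto' (by fun_prop) 0 x (by simp)).mono_left nhdsWithin_le_nhds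
  refine ge_of_tendsto slope_tendsto ?_
  filter_upwards [line_tendsto.eventually hT, self_mem_nhdsWithin] with t hmono ht
  have ht : 0 < t := ht
  rw [add_sub_cancel_left, norm_smul, Real.norm_of_nonneg ht.le, map_smul, smul_eq_mul] at hmono
  rw [smul_apply, smul_eq_mul, le_inv_mul_iff₀ ht]
  exact le_of_mul_le_mul_left (by linarith) ht

lemma mul_norm_sq_le_fderiv_fderiv_of_strongConvexOn {m : ℝ} {f' : E → E →L[ℝ] ℝ}
    {f'' : E →L[ℝ] E →L[ℝ] ℝ} (hf : StrongConvexOn s m f) (hs : s ∈ 𝓝 x)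
    (hf' : ∀ᶠ z in 𝓝 x, HasFDerivAt f (f' z) z) (hf'' : HasFDerivAt f' f'' x) (u : E) :
    m * ‖u‖ ^ 2 ≤ f'' u u := by
  refine mul_norm_sq_le_fderiv_of_eventually_mul_norm_sq_le ?_ hf'' u
  filter_upwards [hs, hf'] with z hz hf'z
  exact mul_norm_sq_le_fderiv_sub_of_strongConvexOn hf (mem_of_mem_nhds hs) hz
    hf'.self_of_nhds hf'z

lemma norm_sub_apply_le_add_of_antilipschitzWith {K : ℝ≥0} {H : E →L[ℝ] G}
    (hH : AntilipschitzWith K H) (T : E →L[ℝ] F) (p : F) (v d : E) :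
    ‖p - T v‖ ≤ ‖p - T d‖ + ‖T‖ * K * ‖H v - H d‖ :=
  calc
    ‖p - T v‖ ≤ ‖p - T d‖ + ‖T d - T v‖ := norm_sub_le_norm_sub_add_norm_sub _ _ _
    _ = ‖p - T d‖ + ‖T (v - d)‖ := by rw [norm_sub_rev (T d), map_sub]
    _ ≤ ‖p - T d‖ + ‖T‖ * ‖v - d‖ := by gcongr; exact T.le_opNorm _
    _ ≤ ‖p - T d‖ + ‖T‖ * (K * ‖H v - H d‖) := by
      gcongr
      simpa only [dist_eq_norm] using hH.le_mul_dist v d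
    _ = ‖p - T d‖ + ‖T‖ * K * ‖H v - H d‖ := by rw [mul_assoc]

end NormedSpace

section Hilbert

variable {X Y : Type*} [NormedAddCommGroup X] [InnerProductSpace ℝ X] [CompleteSpace X]
  [NormedAddCommGroup Y] [InnerProductSpace ℝ Y] [CompleteSpace Y]

lemma mul_norm_sq_le_inner_fderiv_gradient_of_strongConvexOn {s : Set Y} {m : ℝ} {h : Y → ℝ}
    {y : Y} {H : Y →L[ℝ] Y} (hh : StrongConvexOn s m h) (hs : s ∈ 𝓝 y)
    (hdiff : ∀ᶠ z in 𝓝 y, DifferentiableAt ℝ h z) (hH : HasFDerivAt (gradient h) H y) (u : Y) :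
    m * ‖u‖ ^ 2 ≤ ⟪H u, u⟫ :=
  mul_norm_sq_le_fderiv_fderiv_of_strongConvexOn hh hs
    (hdiff.mono fun _ hz ↦ hz.hasGradientAt.hasFDerivAt)
    ((InnerProductSpace.toDualMap ℝ Y).toContinuousLinearMap.hasFDerivAt.comp y hH) u

lemma antilipschitzWith_fderiv_gradient_of_strongConvexOn {s : Set Y} {m : ℝ≥0} {h : Y → ℝ}
    {y : Y} {H : Y →L[ℝ] Y} (hm : 0 < m) (hh : StrongConvexOn s m h) (hs : s ∈ 𝓝 y)
    (hdiff : ∀ᶠ z in 𝓝 y, DifferentiableAt ℝ h z) (hH : HasFDerivAt (gradient h) H y) :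
    AntilipschitzWith m⁻¹ H :=
  H.antilipschitz_of_forall_le_inner_map hm fun u ↦ by
    rw [mul_comm]
    exact (mul_norm_sq_le_inner_fderiv_gradient_of_strongConvexOn hh hs hdiff hH u).trans
      (le_abs_self _)

/-- The vectors `p` and `q` take the places of `∇ₓ f(x,y)` and `∇_y f(x,y)`. -/
theorem stmt_8_general (g : X → Y → ℝ) (hg : ∀ x, Differentiable ℝ (g x)) {μ : ℝ} (hμ : 0 < μ)
    {L : ℝ≥0} {x : X} {y : Y} (hsc : StrongConvexOn univ μ (g x))
    (hL : LipschitzWith L fun x' ↦ gradient (g x') y)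
    {Gyx : X →L[ℝ] Y} (hGyx : HasFDerivAt (fun x' ↦ gradient (g x') y) Gyx x)
    {Gyy : Y →L[ℝ] Y} (hGyy : HasFDerivAt (gradient (g x)) Gyy y)
    (p : X) {q v : Y} (hv : Gyy v = q) (d : Y) :
    ‖p - ContinuousLinearMap.adjoint Gyx v‖
      ≤ ‖p - ContinuousLinearMap.adjoint Gyx d‖ + L / μ * ‖q - Gyy d‖ := by
  lift μ to ℝ≥0 using hμ.le
  have hGyy_anti : AntilipschitzWith μ⁻¹ Gyy :=
    antilipschitzWith_fderiv_gradient_of_strongConvexOn (mod_cast hμ) hsc univ_mem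
      (.of_forall (hg x)) hGyy
  have hGyx_norm : ‖ContinuousLinearMap.adjoint Gyx‖ ≤ L :=
    (LinearIsometryEquiv.norm_map _ _).trans_le (hGyx.le_of_lipschitz hL)
  rw [← hv, div_eq_mul_inv, ← NNReal.coe_inv]
  refine (norm_sub_apply_le_add_of_antilipschitzWith hGyy_anti _ p v d).trans ?_
  gcongr

end Hilbert

/-- for all `x, y, d`, with `A = ∇ₓf − (∇²_{yx}g)ᵀ d` and `B = ∇_y f − ∇²_{yy}g d`,
one has `‖F(x,y)‖ ≤ ‖A‖ + (L_{yx}^g/μ_g) ‖B‖`. -/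
theorem stmt_8 {n m : ℕ} (f g : Vec n → Vec m → ℝ)
    (hf : ContDiff ℝ 1 (Function.uncurry f))
    -- Assumption A2
    (hg : ContDiff ℝ 2 (Function.uncurry g))
    (μg : ℝ) (hμg : 0 < μg)
    (hsc : ∀ x, StrongConvexOn Set.univ μg (g x))
    (Lyyg Lyxg : ℝ≥0)
    (hgyLy : ∀ x, LipschitzWith Lyyg fun y => grady g x y)
    (hgyLx : ∀ y, LipschitzWith Lyxg fun x => grady g x y)
    (Gyx : Vec n → Vec m → Vec n →L[ℝ] Vec m)
    (Gyy : Vec n → Vec m → Vec m →L[ℝ] Vec m)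
    (hGyx : ∀ x y, HasFDerivAt (fun x' => grady g x' y) (Gyx x y) x)
    (hGyy : ∀ x y, HasFDerivAt (fun y' => grady g x y') (Gyy x y) y)
    (Cyxg Cyyg : ℝ≥0)
    (hGyxL : LipschitzWith Cyxg fun p : Vec n × Vec m => Gyx p.1 p.2)
    (hGyyL : LipschitzWith Cyyg fun p : Vec n × Vec m => Gyy p.1 p.2)
    -- the surrogate direction `v`
    (v : Vec n → Vec m → Vec m)
    (hv : ∀ x y, Gyy x y (v x y) = grady f x y) :
    ∀ (x : Vec n) (y : Vec m) (d : Vec m),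
      ‖Fsur f Gyx v x y‖
        ≤ ‖gradx f x y - ContinuousLinearMap.adjoint (Gyx x y) d‖
          + ((Lyxg : ℝ) / μg) * ‖grady f x y - Gyy x y d‖ := by
  have hg_diff (x : Vec n) : Differentiable ℝ (g x) :=
    (hg.differentiable two_ne_zero).comp (by fun_prop : Differentiable ℝ fun y ↦ (x, y))
  exact fun x y ↦
    stmt_8_general g hg_diff hμg (hsc x) (hgyLx y) (hGyx x y) (hGyy x y) _ (hv x y)

end
end

section
/- Let α, ε > 0 and suppose Assumption A2 holds. Let t ↦ (x(t), y(t)), t ≥ 0, be a continuously differentiable solution of the relaxed safe gradient flow (RXGF). If the initial condition satisfies h(x(0), y(0)) ≤ ε², then h(x(t), y(t)) ≤ ε² for all t ≥ 0 (the sublevel set L⁻_{ε²}(h) = {(x,y) : h(x,y) ≤ ε²} is forward invariant). -/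
open Set MeasureTheory
open scoped NNReal RealInnerProductSpace

noncomputable section

/-- The compact constraint function `h(x,y) = ‖∇_y g(x,y)‖²`. -/
noncomputable def hbar {n m : ℕ} (g : Vec n → Vec m → ℝ) (x : Vec n) (y : Vec m) : ℝ :=
  ‖grady g x y‖ ^ 2

/-!
At a point where `∇h ≠ 0`, the multiplier `λ` is chosen so that `⟪∇h, ż⟫ ≤ -α (h - ε²)` for the
velocity `ż` of the flow; where `∇h = 0`, the derivative `⟪∇h, ż⟫` of `h` along the flow vanishes
whatever the velocity is. Hence `h` is nonincreasing along the flow as long as `h > ε²`, and a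
function that cannot increase while it is above a level never crosses that level.
-/

lemma image_le_const_of_deriv_right_nonpos_above {u u' : ℝ → ℝ} {a b c : ℝ}
    (hu : ContinuousOn u (Icc a b)) (hu' : ∀ t ∈ Ico a b, HasDerivWithinAt u (u' t) (Ici t) t)
    (ha : u a ≤ c) (bound : ∀ t ∈ Ico a b, c < u t → u' t ≤ 0) :
    ∀ t ∈ Icc a b, u t ≤ c := by
  -- The derivative bound is not strict, so the constant barrier is tilted by a slope `δ → 0`.
  have le_tilted (δ : ℝ) (hδ : 0 < δ) : ∀ t ∈ Icc a b, u t ≤ c + δ * (1 + (t - a)) := by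
    refine image_le_of_deriv_right_lt_deriv_boundary hu hu' (B' := fun _ => δ) ?_ ?_ ?_
    · simpa using ha.trans (le_add_of_nonneg_right hδ.le)
    · exact fun t => by
        simpa using ((((hasDerivAt_id t).sub_const a).const_add 1).const_mul δ).const_add c
    · intro t ht hut
      have : 0 < δ * (1 + (t - a)) := mul_pos hδ (by linarith [ht.1])
      exact (bound t ht (by linarith)).trans_lt hδ
  intro t ht
  have hpos : 0 < 1 + (t - a) := by linarith [ht.1]
  refine le_of_forall_pos_le_add fun η hη => ?_
  simpa [div_mul_cancel₀ _ hpos.ne'] using le_tilted _ (div_pos hη hpos) t ht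

section PartialGradients

open scoped Gradient

lemma contDiff_partial_gradient_snd {X Y : Type*} [NormedAddCommGroup X] [NormedSpace ℝ X]
    [NormedAddCommGroup Y] [InnerProductSpace ℝ Y] [CompleteSpace Y] {g : X → Y → ℝ}
    {k l : WithTop ℕ∞} (hg : ContDiff ℝ l (Function.uncurry g)) (hkl : k + 1 ≤ l) :
    ContDiff ℝ k fun p : X × Y => ∇ (g p.1) p.2 := by
  have hg_fst : ContDiff ℝ l (Function.uncurry fun p : X × Y => g p.1) :=
    hg.comp ((contDiff_fst.comp contDiff_fst).prodMk contDiff_snd)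
  exact (InnerProductSpace.toDual ℝ Y).symm.contDiff.comp (hg_fst.fderiv contDiff_snd hkl)

variable {X Y : Type*} [NormedAddCommGroup X] [InnerProductSpace ℝ X] [CompleteSpace X]
  [NormedAddCommGroup Y] [InnerProductSpace ℝ Y] [CompleteSpace Y]

lemma fderiv_uncurry_apply_eq_inner_gradient {h : X → Y → ℝ} {x : X} {y : Y}
    (hh : DifferentiableAt ℝ (Function.uncurry h) (x, y)) (v : X) (w : Y) :
    fderiv ℝ (Function.uncurry h) (x, y) (v, w) =
      ⟪∇ (fun x' => h x' y) x, v⟫ + ⟪∇ (h x) y, w⟫ := by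
  have hasFDerivAt_left : HasFDerivAt (fun x' => h x' y)
      (fderiv ℝ (Function.uncurry h) (x, y) ∘L .inl ℝ X Y) x :=
    HasFDerivAt.comp (g := Function.uncurry h) (f := fun x' => (x', y)) x hh.hasFDerivAt
      (hasFDerivAt_prodMk_left x y)
  have hasFDerivAt_right : HasFDerivAt (h x)
      (fderiv ℝ (Function.uncurry h) (x, y) ∘L .inr ℝ X Y) y :=
    HasFDerivAt.comp (g := Function.uncurry h) y hh.hasFDerivAt (hasFDerivAt_prodMk_right x y)
  rw [inner_gradient_left, inner_gradient_left, hasFDerivAt_left.fderiv, hasFDerivAt_right.fderiv]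
  simp [← map_add]

lemma hasDerivWithinAt_comp_of_partial_gradients {h : X → Y → ℝ} {x : ℝ → X} {y : ℝ → Y}
    {v : X} {w : Y} {s : Set ℝ} {t : ℝ}
    (hh : DifferentiableAt ℝ (Function.uncurry h) (x t, y t))
    (hx : HasDerivWithinAt x v s t) (hy : HasDerivWithinAt y w s t) :
    HasDerivWithinAt (fun r => h (x r) (y r))
      (⟪∇ (fun x' => h x' (y t)) (x t), v⟫ + ⟪∇ (h (x t)) (y t), w⟫) s t := by
  rw [← fderiv_uncurry_apply_eq_inner_gradient hh]
  exact hh.hasFDerivAt.comp_hasDerivWithinAt t (hx.prodMk hy)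

end PartialGradients

section BarrierMultiplier

variable {X Y : Type*} [NormedAddCommGroup X] [InnerProductSpace ℝ X]
  [NormedAddCommGroup Y] [InnerProductSpace ℝ Y]

/-- The multiplier `λ` of the safe gradient flow at a point with constraint gradient `(a, b)` and
objective gradient `(p, q)`: the least `λ ≥ 0` for which the velocity `-(p, q) - λ (a, b)` decreases
the constraint at rate at least `β`. For `(a, b) = 0` there is in general no such `λ`, and the value
is `0` because of division by zero. -/
def barrierMultiplier (a : X) (b : Y) (p : X) (q : Y) (β : ℝ) : ℝ :=
  max (-⟪a, p⟫ - ⟪b, q⟫ + β) 0 / (‖a‖ ^ 2 + ‖b‖ ^ 2)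

lemma inner_add_inner_le_neg_of_barrierMultiplier {a : X} {b : Y} (hab : ¬(a = 0 ∧ b = 0))
    (p : X) (q : Y) (β : ℝ) :
    ⟪a, -p - barrierMultiplier a b p q β • a⟫ + ⟪b, -q - barrierMultiplier a b p q β • b⟫
      ≤ -β := by
  have hne : ‖a‖ ^ 2 + ‖b‖ ^ 2 ≠ 0 := by
    rwa [Ne, add_eq_zero_iff_of_nonneg (sq_nonneg _) (sq_nonneg _), sq_eq_zero_iff,
      sq_eq_zero_iff, norm_eq_zero, norm_eq_zero]
  calc ⟪a, -p - barrierMultiplier a b p q β • a⟫ + ⟪b, -q - barrierMultiplier a b p q β • b⟫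
      = -⟪a, p⟫ - ⟪b, q⟫ - barrierMultiplier a b p q β * (‖a‖ ^ 2 + ‖b‖ ^ 2) := by
        simp only [inner_sub_right, inner_neg_right, inner_smul_right, real_inner_self_eq_norm_sq]
        ring
    _ = -⟪a, p⟫ - ⟪b, q⟫ - max (-⟪a, p⟫ - ⟪b, q⟫ + β) 0 := by
        rw [barrierMultiplier, div_mul_cancel₀ _ hne]
    _ ≤ -β := by linarith [le_max_left (-⟪a, p⟫ - ⟪b, q⟫ + β) 0]

lemma inner_add_inner_nonpos_of_eq_barrierMultiplier {a p : X} {b q : Y} {β l : ℝ} (hβ : 0 ≤ β)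
    (hl : ¬(a = 0 ∧ b = 0) → l = barrierMultiplier a b p q β) :
    ⟪a, -p - l • a⟫ + ⟪b, -q - l • b⟫ ≤ 0 := by
  by_cases hab : a = 0 ∧ b = 0
  · simp [hab.1, hab.2]
  · rw [hl hab]
    exact (inner_add_inner_le_neg_of_barrierMultiplier hab p q β).trans (neg_nonpos.2 hβ)

end BarrierMultiplier

section SafeGradientFlow

open scoped Gradient

/-- `(p t, q t)` stands for the objective gradient at `(x t, y t)`. -/
theorem stmt_10_general {X Y : Type*} [NormedAddCommGroup X] [InnerProductSpace ℝ X]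
    [CompleteSpace X] [NormedAddCommGroup Y] [InnerProductSpace ℝ Y] [CompleteSpace Y]
    (h : X → Y → ℝ) (hh : Differentiable ℝ (Function.uncurry h)) (α c : ℝ) (hα : 0 ≤ α)
    (p : ℝ → X) (q : ℝ → Y) (x : ℝ → X) (y : ℝ → Y) (lam : ℝ → ℝ)
    (hlam : ∀ t, 0 ≤ t → ¬(∇ (fun x' => h x' (y t)) (x t) = 0 ∧ ∇ (h (x t)) (y t) = 0) →
      lam t = barrierMultiplier (∇ (fun x' => h x' (y t)) (x t)) (∇ (h (x t)) (y t)) (p t) (q t)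
        (α * (h (x t) (y t) - c)))
    (hx : ∀ t, 0 ≤ t → HasDerivWithinAt x
      (-p t - lam t • ∇ (fun x' => h x' (y t)) (x t)) (Ici 0) t)
    (hy : ∀ t, 0 ≤ t → HasDerivWithinAt y (-q t - lam t • ∇ (h (x t)) (y t)) (Ici 0) t)
    (h0 : h (x 0) (y 0) ≤ c) :
    ∀ t, 0 ≤ t → h (x t) (y t) ≤ c := by
  intro t ht
  have hderiv (s : ℝ) (hs : 0 ≤ s) :=
    hasDerivWithinAt_comp_of_partial_gradients (hh (x s, y s)) (hx s hs) (hy s hs)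
  refine image_le_const_of_deriv_right_nonpos_above
    (fun s hs => (hderiv s hs.1).continuousWithinAt.mono Icc_subset_Ici_self)
    (fun s hs => (hderiv s hs.1).mono (Ici_subset_Ici.2 hs.1)) h0 ?_ t ⟨ht, le_rfl⟩
  intro s hs hcs
  exact inner_add_inner_nonpos_of_eq_barrierMultiplier
    (mul_nonneg hα (sub_nonneg.2 hcs.le)) (hlam s hs.1)

end SafeGradientFlow

lemma differentiable_uncurry_hbar {n m : ℕ} {g : Vec n → Vec m → ℝ}
    (hg : ContDiff ℝ 2 (Function.uncurry g)) : Differentiable ℝ (Function.uncurry (hbar g)) :=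
  ((contDiff_partial_gradient_snd (k := 1) hg one_add_one_eq_two.le).differentiable
    one_ne_zero).norm_sq ℝ

/-- along the relaxed safe gradient flow (RXGF), the sublevel set
`{(x,y) : h(x,y) ≤ ε²}` is forward invariant. -/
theorem stmt_10 {n m : ℕ} (f g : Vec n → Vec m → ℝ)
    (hf : ContDiff ℝ 1 (Function.uncurry f))
    -- Assumption A2
    (hg : ContDiff ℝ 2 (Function.uncurry g))
    (μg : ℝ) (hμg : 0 < μg)
    (hsc : ∀ x, StrongConvexOn Set.univ μg (g x))
    (Lyyg Lyxg : ℝ≥0)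
    (hgyLy : ∀ x, LipschitzWith Lyyg fun y => grady g x y)
    (hgyLx : ∀ y, LipschitzWith Lyxg fun x => grady g x y)
    (Gyx : Vec n → Vec m → Vec n →L[ℝ] Vec m)
    (Gyy : Vec n → Vec m → Vec m →L[ℝ] Vec m)
    (hGyx : ∀ x y, HasFDerivAt (fun x' => grady g x' y) (Gyx x y) x)
    (hGyy : ∀ x y, HasFDerivAt (fun y' => grady g x y') (Gyy x y) y)
    (Cyxg Cyyg : ℝ≥0)
    (hGyxL : LipschitzWith Cyxg fun p : Vec n × Vec m => Gyx p.1 p.2)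
    (hGyyL : LipschitzWith Cyyg fun p : Vec n × Vec m => Gyy p.1 p.2)
    -- the relaxed safe gradient flow (RXGF) with parameters `α, ε > 0`, on `t ≥ 0`:
    (α ε : ℝ) (hα : 0 < α) (hε : 0 < ε)
    (x : ℝ → Vec n) (y : ℝ → Vec m) (lam : ℝ → ℝ)
    (hlam : ∀ t, 0 ≤ t →
      ((¬(gradx (hbar g) (x t) (y t) = 0 ∧ grady (hbar g) (x t) (y t) = 0)) →
        lam t = max (-⟪gradx (hbar g) (x t) (y t), gradx f (x t) (y t)⟫
              - ⟪grady (hbar g) (x t) (y t), grady f (x t) (y t)⟫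
              + α * (hbar g (x t) (y t) - ε ^ 2)) 0
          / (‖gradx (hbar g) (x t) (y t)‖ ^ 2 + ‖grady (hbar g) (x t) (y t)‖ ^ 2)) ∧
      ((gradx (hbar g) (x t) (y t) = 0 ∧ grady (hbar g) (x t) (y t) = 0) → lam t = 0))
    (hx : ∀ t, 0 ≤ t → HasDerivAt x
      (-gradx f (x t) (y t) - lam t • gradx (hbar g) (x t) (y t)) t)
    (hy : ∀ t, 0 ≤ t → HasDerivAt y
      (-grady f (x t) (y t) - lam t • grady (hbar g) (x t) (y t)) t)
    -- the initial condition lies in the sublevel set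
    (h0 : hbar g (x 0) (y 0) ≤ ε ^ 2) :
    ∀ t, 0 ≤ t → hbar g (x t) (y t) ≤ ε ^ 2 := by
  exact stmt_10_general (hbar g) (differentiable_uncurry_hbar hg) α (ε ^ 2) hα.le _ _ x y lam
    (fun t ht => (hlam t ht).1) (fun t ht => (hx t ht).hasDerivWithinAt)
    (fun t ht => (hy t ht).hasDerivWithinAt) h0

end
end

section
/- Fix (x,y) ∈ ℝⁿ × ℝᵐ and α, ε > 0. If (u,v) = (0,0) is a minimizer of QP (RXSF) at (x,y), then there exists λ̃ ≥ 0 such that the KKT conditions of the relaxed single-level problem hold at (x,y): ∇_x f(x,y) + λ̃ ∇_x h(x,y) = 0, ∇_y f(x,y) + λ̃ ∇_y h(x,y) = 0, λ̃ (h(x,y) − ε²) = 0, and h(x,y) − ε² ≤ 0. -/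
open Set MeasureTheory
open scoped NNReal RealInnerProductSpace

noncomputable section

/-!
Only first-order information at the minimizer matters. On the half-space `{w | φ w + c ≤ 0}`, which
is convex, the derivative of the objective at a minimizer `w₀` is nonnegative in every feasible
direction. The affine Farkas lemma then writes this derivative as `-μ • φ` with `0 ≤ μ`, where
`μ = 0` if the constraint is inactive. For (RXSF) at `(0, 0)` the objective has the same derivative
as `f`, and `φ` is the derivative of `h`, so these are the KKT conditions of the relaxed problem.
-/

section Farkas

theorem linearMap_eq_zero_of_forall_nonneg {R V : Type*} [Ring R] [PartialOrder R]
    [IsOrderedAddMonoid R] [AddCommGroup V] [Module R V] {ψ : V →ₗ[R] R}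
    (hψ : ∀ v, 0 ≤ ψ v) : ψ = 0 :=
  LinearMap.ext fun v ↦ le_antisymm (by simpa using hψ (-v)) (hψ v)

variable {𝕜 V : Type*} [Field 𝕜] [LinearOrder 𝕜] [IsStrictOrderedRing 𝕜] [AddCommGroup V]
  [Module 𝕜 V] {φ ψ : V →ₗ[𝕜] 𝕜} {c : 𝕜}

theorem linearMap_eq_zero_of_nonneg_on_halfspace (hc : c < 0)
    (hψ : ∀ v, φ v + c ≤ 0 → 0 ≤ ψ v) : ψ = 0 := by
  refine linearMap_eq_zero_of_forall_nonneg fun v ↦ ?_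
  obtain ⟨t, ht, hφt⟩ := exists_pos_mul_lt (neg_pos.2 hc) (φ v)
  have hfeas : φ (t • v) + c ≤ 0 := by
    rw [map_smul, smul_eq_mul]
    linarith
  have hmul : 0 ≤ t * ψ v := by simpa using hψ (t • v) hfeas
  exact nonneg_of_mul_nonneg_right hmul ht

theorem exists_multiplier_of_nonpos_imp_nonneg (hψ : ∀ v, φ v ≤ 0 → 0 ≤ ψ v) :
    ∃ μ : 𝕜, 0 ≤ μ ∧ ψ + μ • φ = 0 := by
  rcases eq_or_ne φ 0 with rfl | hφ
  · have hψ_zero : ψ = 0 := linearMap_eq_zero_of_forall_nonneg fun v ↦ hψ v le_rfl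
    exact ⟨0, le_rfl, by simp [hψ_zero]⟩
  · obtain ⟨e, he⟩ := LinearMap.surjective hφ (-1)
    refine ⟨ψ e, hψ e (by simp [he]), linearMap_eq_zero_of_forall_nonneg fun v ↦ ?_⟩
    -- `v + φ v • e` is the projection of `v` onto `ker φ` along `e`.
    have hproj : 0 ≤ ψ (v + φ v • e) := hψ _ (by simp [he])
    simpa [mul_comm] using hproj

theorem exists_multiplier_of_nonneg_on_halfspace (hc : c ≤ 0)
    (hψ : ∀ v, φ v + c ≤ 0 → 0 ≤ ψ v) :
    ∃ μ : 𝕜, 0 ≤ μ ∧ ψ + μ • φ = 0 ∧ μ * c = 0 := by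
  rcases hc.lt_or_eq with hc | rfl
  · exact ⟨0, le_rfl, by simp [linearMap_eq_zero_of_nonneg_on_halfspace hc hψ], zero_mul c⟩
  · obtain ⟨μ, hμ, hstat⟩ := exists_multiplier_of_nonpos_imp_nonneg (by simpa using hψ)
    exact ⟨μ, hμ, hstat, mul_zero μ⟩

end Farkas

section KKT

variable {V : Type*} [NormedAddCommGroup V] [NormedSpace ℝ V] {J : V → ℝ} {J' : V →L[ℝ] ℝ} {w₀ : V}

theorem nonneg_fderiv_sub_of_isMinOn_convex {K : Set V} {w : V} (hK : Convex ℝ K)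
    (hmin : IsMinOn J K w₀) (hJ : HasFDerivAt J J' w₀) (hw₀ : w₀ ∈ K) (hw : w ∈ K) :
    0 ≤ J' (w - w₀) :=
  hmin.localize.hasFDerivWithinAt_nonneg hJ.hasFDerivWithinAt
    (sub_mem_posTangentConeAt_of_segment_subset (hK.segment_subset hw₀ hw))

theorem exists_multiplier_of_isMinOn_halfspace {φ : V →L[ℝ] ℝ} {c : ℝ} (hw₀ : φ w₀ + c ≤ 0)
    (hmin : IsMinOn J {w | φ w + c ≤ 0} w₀) (hJ : HasFDerivAt J J' w₀) :
    ∃ μ : ℝ, 0 ≤ μ ∧ J' + μ • φ = 0 ∧ μ * (φ w₀ + c) = 0 := by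
  have hconvex : Convex ℝ {w | φ w + c ≤ 0} := by
    simp only [← le_neg_iff_add_nonpos_right]
    exact convex_halfSpace_le φ.toLinearMap.isLinear (-c)
  have hdir : ∀ d, φ d + (φ w₀ + c) ≤ 0 → 0 ≤ J' d := fun d hd ↦ by
    have hfeas : φ (w₀ + d) + c ≤ 0 := by
      rw [map_add]
      linarith
    simpa using nonneg_fderiv_sub_of_isMinOn_convex hconvex hmin hJ hw₀ hfeas
  obtain ⟨μ, hμ, hstat, hslack⟩ :=
    exists_multiplier_of_nonneg_on_halfspace (φ := φ.toLinearMap) (ψ := J'.toLinearMap)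
      hw₀ hdir
  exact ⟨μ, hμ, ContinuousLinearMap.coe_injective hstat, hslack⟩

end KKT

section QuadraticProgram

variable {E F : Type*} [NormedAddCommGroup E] [InnerProductSpace ℝ E] [NormedAddCommGroup F]
  [InnerProductSpace ℝ F]

/-- The functional `(u, v) ↦ ⟪a, u⟫ + ⟪b, v⟫`. The product `E × F` carries the sup norm, so this is
not an inner product with `(a, b)` in the sense of Mathlib. -/
def pairInner (a : E) (b : F) : E × F →L[ℝ] ℝ :=
  (innerSL ℝ a).coprod (innerSL ℝ b)

theorem pairInner_apply (a : E) (b : F) (w : E × F) : pairInner a b w = ⟪a, w.1⟫ + ⟪b, w.2⟫ :=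
  rfl

theorem pairInner_add_smul (p a : E) (q b : F) (μ : ℝ) :
    pairInner (p + μ • a) (q + μ • b) = pairInner p q + μ • pairInner a b := by
  ext <;> simp [pairInner]

theorem pairInner_eq_zero_iff {a : E} {b : F} : pairInner a b = 0 ↔ a = 0 ∧ b = 0 := by
  refine ⟨fun h ↦ ⟨?_, ?_⟩, ?_⟩
  · simpa [pairInner_apply] using DFunLike.congr_fun h (a, 0)
  · simpa [pairInner_apply] using DFunLike.congr_fun h (0, b)
  · rintro ⟨rfl, rfl⟩
    exact ContinuousLinearMap.ext fun w ↦ by simp [pairInner_apply]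

/-- The objective of (RXSF), with `p`, `q` in place of the partial gradients of `f`. -/
def qpObjective (p : E) (q : F) (w : E × F) : ℝ :=
  (1 : ℝ) / 2 * ‖w.1 + p‖ ^ 2 + (1 : ℝ) / 2 * ‖w.2 + q‖ ^ 2

theorem hasFDerivAt_half_norm_add_sq (p u : E) :
    HasFDerivAt (fun u ↦ (1 : ℝ) / 2 * ‖u + p‖ ^ 2) (innerSL ℝ (u + p)) u := by
  refine (((hasFDerivAt_id u).add_const p).norm_sq.const_mul ((1 : ℝ) / 2)).congr_fderiv ?_
  ext v
  simp

theorem hasFDerivAt_qpObjective (p : E) (q : F) (w : E × F) :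
    HasFDerivAt (qpObjective p q) (pairInner (w.1 + p) (w.2 + q)) w :=
  ((hasFDerivAt_half_norm_add_sq p w.1).comp w hasFDerivAt_fst).add
    ((hasFDerivAt_half_norm_add_sq q w.2).comp w hasFDerivAt_snd)

/-- `p`, `q` stand for the partial gradients of `f`, `a`, `b` for those of `h`, and `s` for
`h(x,y) - ε²`. -/
theorem stmt_11_general (p a : E) (q b : F) (α s : ℝ) (hα : 0 < α)
    (h0feas : ⟪a, (0 : E)⟫ + ⟪b, (0 : F)⟫ + α * s ≤ 0)
    (h0min : ∀ (u : E) (v : F), ⟪a, u⟫ + ⟪b, v⟫ + α * s ≤ 0 →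
      (1 : ℝ) / 2 * ‖(0 : E) + p‖ ^ 2 + (1 : ℝ) / 2 * ‖(0 : F) + q‖ ^ 2
        ≤ (1 : ℝ) / 2 * ‖u + p‖ ^ 2 + (1 : ℝ) / 2 * ‖v + q‖ ^ 2) :
    ∃ lam : ℝ, 0 ≤ lam ∧ p + lam • a = 0 ∧ q + lam • b = 0 ∧ lam * s = 0 ∧ s ≤ 0 := by
  have hmin : IsMinOn (qpObjective p q) {w | pairInner a b w + α * s ≤ 0} 0 :=
    fun w hw ↦ h0min w.1 w.2 hw
  obtain ⟨lam, hlam, hstat, hslack⟩ :=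
    exists_multiplier_of_isMinOn_halfspace h0feas hmin (hasFDerivAt_qpObjective p q 0)
  rw [Prod.fst_zero, Prod.snd_zero, zero_add, zero_add, ← pairInner_add_smul,
    pairInner_eq_zero_iff] at hstat
  rw [map_zero, zero_add, mul_left_comm] at hslack
  have hs : α * s ≤ 0 := by simpa using h0feas
  exact ⟨lam, hlam, hstat.1, hstat.2, (mul_eq_zero_iff_left hα.ne').1 hslack,
    nonpos_of_mul_nonpos_right hs hα⟩

end QuadraticProgram

/-- if `(u,v) = (0,0)` is a minimizer of the QP (RXSF) at `(x,y)`, then there exists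
`λ̃ ≥ 0` such that the KKT conditions of the relaxed single-level problem hold at `(x,y)`. -/
theorem stmt_11 {n m : ℕ} (f g : Vec n → Vec m → ℝ)
    (hf : ContDiff ℝ 1 (Function.uncurry f))
    (hg : ContDiff ℝ 2 (Function.uncurry g))
    (x : Vec n) (y : Vec m) (α ε : ℝ) (hα : 0 < α) (hε : 0 < ε)
    -- `(0,0)` is feasible for QP (RXSF),
    (h0feas : ⟪gradx (hbar g) x y, (0 : Vec n)⟫ + ⟪grady (hbar g) x y, (0 : Vec m)⟫
      + α * (hbar g x y - ε ^ 2) ≤ 0)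
    -- and `(0,0)` minimizes the objective among all feasible points.
    (h0min : ∀ (u : Vec n) (v : Vec m),
      ⟪gradx (hbar g) x y, u⟫ + ⟪grady (hbar g) x y, v⟫ + α * (hbar g x y - ε ^ 2) ≤ 0 →
      (1:ℝ)/2 * ‖(0 : Vec n) + gradx f x y‖ ^ 2 + (1:ℝ)/2 * ‖(0 : Vec m) + grady f x y‖ ^ 2
        ≤ (1:ℝ)/2 * ‖u + gradx f x y‖ ^ 2 + (1:ℝ)/2 * ‖v + grady f x y‖ ^ 2) :
    ∃ lam : ℝ, 0 ≤ lam ∧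
      gradx f x y + lam • gradx (hbar g) x y = 0 ∧
      grady f x y + lam • grady (hbar g) x y = 0 ∧
      lam * (hbar g x y - ε ^ 2) = 0 ∧
      hbar g x y - ε ^ 2 ≤ 0 := by
  exact stmt_11_general _ _ _ _ α _ hα h0feas h0min

end
end
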